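/- arXiv:2005.05459 — 2 statements merged into one kernel-verified Lean document; each statement's English description precedes it below -/
import Mathlib

section
/- Let b ≥ 1/2, T̃ > 0, let y : [0,T̃] → (0,∞) be continuous and let Ψ : [0,T̃] → ℝ be continuous. Let I_ν(x) = Σ_{k=0}^∞ (x/2)^{2k+ν}/(k!·Γ(k+ν+1)) and q_s(z,ζ,b) = (√(zζ)/s)·(ζ/z)^b·exp(−(z²+ζ²)/(2s))·I_{b−1/2}(zζ/s). Fix τ ∈ (0,T̃] and z > 0 such that z > y(k) for all k ∈ [0,τ]. Then the Bessel potential q(τ,z) := ∫_0^τ Ψ(k)·[∂q_{τ−k}(z,ζ,b)/∂ζ]|_{ζ=y(k)} dk is well defined (the integrand extends continuously by 0 at k = τ), and on the open set of such points (τ,z) it is C¹ in τ and C² in z and satisfies ∂q/∂τ = (1/2)∂²q/∂z² + (b/z)∂q/∂z. -/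
/-- Modified Bessel function of the first kind,
`I_ν(x) = Σ_{k=0}^∞ (x/2)^{2k+ν}/(k!·Γ(k+ν+1))`. -/
noncomputable def besselI (ν x : ℝ) : ℝ :=
  ∑' k : ℕ, (x / 2) ^ (2 * (k : ℝ) + ν) / ((Nat.factorial k : ℝ) * Real.Gamma ((k : ℝ) + ν + 1))

/-- Bessel heat kernel
`q_s(z,ζ,b) = (√(zζ)/s)·(ζ/z)^b·exp(−(z²+ζ²)/(2s))·I_{b−1/2}(zζ/s)`. -/
noncomputable def besselKernel (b s z ζ : ℝ) : ℝ :=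
  Real.sqrt (z * ζ) / s * (ζ / z) ^ b * Real.exp (-(z ^ 2 + ζ ^ 2) / (2 * s)) *
    besselI (b - 1 / 2) (z * ζ / s)

/-!
Write `I_μ(x) = (x/2)^μ E_μ(x²/4)` with `E_μ` entire. Since `E_μ(x²)` grows at most like
`exp (c|x|)` for every `c > 2`, the kernel `∂q_s/∂ζ` tends to `0` with all its derivatives as
`s → 0⁺`, locally uniformly off the diagonal `z² = ζ²`. Extended by `0` to `s ≤ 0` it
therefore solves the Bessel equation for *all* real `s`, and the upper limit `τ` of the potential
may be replaced by a fixed `M > τ`: no boundary term arises, and one differentiates under an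
integral over a fixed interval. With `D = z⁻¹ ∂_z` one has
`½ ∂_z² + (b/z) ∂_z = (b + ½) D + ½ z² D²`, and `D` maps the functions
`s^(-p) exp(-(z² + ζ²)/(2s)) E_μ(z²ζ²/(4s²))` to combinations of functions of the same form, so the
equation for the kernel reduces to the recurrence `E_μ(u) = (μ + 1) E_{μ+1}(u) + u E_{μ+2}(u)`.
-/

open Set Filter Topology MeasureTheory
open scoped Nat Interval

section ParametricIntegral

variable {E : Type*} [NormedAddCommGroup E] {a b : ℝ}

lemma exists_nhds_norm_le_of_continuousOn_prod {X Y : Type*} [TopologicalSpace X]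
    [LocallyCompactSpace X] [TopologicalSpace Y] {F : X → Y → E} {U : Set X} {K : Set Y}
    (hU : IsOpen U) (hK : IsCompact K) (hF : ContinuousOn (Function.uncurry F) (U ×ˢ K)) {x : X}
    (hx : x ∈ U) : ∃ C : ℝ, ∃ V ∈ 𝓝 x, V ⊆ U ∧ ∀ w ∈ V, ∀ k ∈ K, ‖F w k‖ ≤ C := by
  obtain ⟨V, hV, hVU, hVc⟩ := local_compact_nhds (hU.mem_nhds hx)
  obtain ⟨C, hC⟩ := (hVc.prod hK).exists_bound_of_continuousOn
    (hF.mono (prod_mono hVU Subset.rfl))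
  exact ⟨C, V, hV, hVU, fun w hw k hk => hC (w, k) ⟨hw, hk⟩⟩

lemma aestronglyMeasurable_uIoc_of_continuousOn_uIcc {f : ℝ → E} (hf : ContinuousOn f [[a, b]]) :
    AEStronglyMeasurable f (volume.restrict (Ι a b)) :=
  (hf.mono uIoc_subset_uIcc).aestronglyMeasurable measurableSet_uIoc

variable [NormedSpace ℝ E]

lemma continuousOn_intervalIntegral_of_continuousOn {X : Type*} [TopologicalSpace X]
    [LocallyCompactSpace X] [FirstCountableTopology X] {F : X → ℝ → E} {U : Set X} (hU : IsOpen U)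
    (hF : ContinuousOn (Function.uncurry F) (U ×ˢ [[a, b]])) :
    ContinuousOn (fun x => ∫ k in a..b, F x k) U := by
  intro x hx
  obtain ⟨C, V, hV, hVU, hC⟩ := exists_nhds_norm_le_of_continuousOn_prod hU isCompact_uIcc hF hx
  refine (intervalIntegral.continuousAt_of_dominated_interval (bound := fun _ => C) ?_ ?_
    intervalIntegrable_const ?_).continuousWithinAt
  · filter_upwards [hV] with w hw
    exact aestronglyMeasurable_uIoc_of_continuousOn_uIcc (hF.uncurry_left w (hVU hw))
  · filter_upwards [hV] with w hw
    exact .of_forall fun k hk => hC w hw k (uIoc_subset_uIcc hk)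
  · exact .of_forall fun k hk =>
      (hF.uncurry_right k (uIoc_subset_uIcc hk)).continuousAt (hU.mem_nhds hx)

lemma hasDerivAt_intervalIntegral_of_continuousOn {F F' : ℝ → ℝ → E} {U : Set ℝ} (hU : IsOpen U)
    (hF : ∀ x ∈ U, ContinuousOn (F x) [[a, b]])
    (hF' : ContinuousOn (Function.uncurry F') (U ×ˢ [[a, b]]))
    (hderiv : ∀ x ∈ U, ∀ k ∈ [[a, b]], HasDerivAt (fun x => F x k) (F' x k) x) {x : ℝ}
    (hx : x ∈ U) : HasDerivAt (fun x => ∫ k in a..b, F x k) (∫ k in a..b, F' x k) x := by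
  obtain ⟨C, V, hV, hVU, hC⟩ := exists_nhds_norm_le_of_continuousOn_prod hU isCompact_uIcc hF' hx
  refine (intervalIntegral.hasDerivAt_integral_of_dominated_loc_of_deriv_le
    (bound := fun _ => C) hV ?_ (hF x hx).intervalIntegrable
    (aestronglyMeasurable_uIoc_of_continuousOn_uIcc (hF'.uncurry_left x hx)) ?_
    intervalIntegrable_const ?_).2
  · filter_upwards [hV] with w hw
    exact aestronglyMeasurable_uIoc_of_continuousOn_uIcc (hF w (hVU hw))
  · exact .of_forall fun k hk w hw => hC w hw k (uIoc_subset_uIcc hk)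
  · exact .of_forall fun k hk w hw => hderiv w (hVU hw) k (uIoc_subset_uIcc hk)

lemma contDiffOn_succ_of_hasDerivAt {n : ℕ} {f f' : ℝ → E} {U : Set ℝ} (hU : IsOpen U)
    (hf : ∀ x ∈ U, HasDerivAt f (f' x) x) (hf' : ContDiffOn ℝ n f' U) :
    ContDiffOn ℝ (n + 1) f U :=
  (contDiffOn_succ_iff_deriv_of_isOpen hU).2
    ⟨fun x hx => (hf x hx).differentiableAt.differentiableWithinAt, by simp,
      hf'.congr fun x hx => (hf x hx).deriv⟩

end ParametricIntegral

/-- The coefficient of `u ^ k` in the Bessel–Clifford series. At the poles of `Γ` the convention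
`Γ = 0`, `0⁻¹ = 0` gives the value of the entire function `1 / Γ`, so `μ` may be any real number. -/
noncomputable def besselCliffordCoeff (μ : ℝ) (k : ℕ) : ℝ :=
  (k ! * Real.Gamma (k + μ + 1))⁻¹

/-- The Bessel–Clifford function, the entire factor of the modified Bessel function:
`I_μ(x) = (x/2)^μ · besselClifford μ (x²/4)`. -/
noncomputable def besselClifford (μ u : ℝ) : ℝ :=
  ∑' k : ℕ, besselCliffordCoeff μ k * u ^ k

section BesselClifford

lemma inv_Gamma_eq_mul_inv_Gamma_add_one (x : ℝ) :
    (Real.Gamma x)⁻¹ = x * (Real.Gamma (x + 1))⁻¹ := by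
  rcases eq_or_ne x 0 with rfl | hx
  · simp only [Real.Gamma_zero, inv_zero, zero_mul]
  · rw [Real.Gamma_add_one hx, mul_inv, mul_inv_cancel_left₀ hx]

lemma succ_mul_besselCliffordCoeff_succ (μ : ℝ) (k : ℕ) :
    (k + 1) * besselCliffordCoeff μ (k + 1) = besselCliffordCoeff (μ + 1) k := by
  rw [besselCliffordCoeff, besselCliffordCoeff, Nat.factorial_succ, Nat.cast_mul, mul_assoc,
    mul_inv, Nat.cast_succ, mul_inv_cancel_left₀ (by positivity)]
  ring_nf

lemma besselCliffordCoeff_eq_mul (μ : ℝ) (k : ℕ) :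
    besselCliffordCoeff μ k = (k + μ + 1) * besselCliffordCoeff (μ + 1) k := by
  rw [besselCliffordCoeff, besselCliffordCoeff, mul_inv, inv_Gamma_eq_mul_inv_Gamma_add_one,
    mul_inv]
  ring_nf

lemma exists_abs_besselCliffordCoeff_le (μ : ℝ) {c : ℝ} (hc : 2 < c) :
    ∃ C, ∀ k, |besselCliffordCoeff μ k| ≤ C * (c ^ (2 * k) / (2 * k)!) := by
  have : 0 < c := by linarith
  set d : ℕ → ℝ := fun k => besselCliffordCoeff μ k / (c ^ (2 * k) / (2 * k)!) with hd
  have hd_succ (k : ℕ) : (k + μ + 1) * c ^ 2 * d (k + 1) = 2 * (2 * k + 1) * d k := by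
    have hcoeff := besselCliffordCoeff_eq_mul μ k
    rw [← succ_mul_besselCliffordCoeff_succ] at hcoeff
    simp only [hd, hcoeff, mul_add_one, pow_add, Nat.factorial_succ]
    push_cast
    field_simp
    ring
  have hgap : 0 < (c ^ 2 - 4) / 2 := by nlinarith
  have hsum : Summable d := by
    refine summable_of_ratio_norm_eventually_le (r := (4 + c ^ 2) / (2 * c ^ 2)) ?_ ?_
    · rw [div_lt_one (by positivity)]
      linarith
    · have hlarge : ∀ᶠ k : ℕ in atTop, 2 - (μ + 1) * ((4 + c ^ 2) / 2) ≤ (c ^ 2 - 4) / 2 * k :=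
        (tendsto_natCast_atTop_atTop.const_mul_atTop hgap).eventually_ge_atTop _
      have hpos : ∀ᶠ k : ℕ in atTop, -(μ + 1) < (k : ℝ) :=
        tendsto_natCast_atTop_atTop.eventually_gt_atTop _
      filter_upwards [hlarge, hpos] with k hk hkμ
      have hkμ' : 0 < (k + μ + 1) * c ^ 2 := mul_pos (by linarith) (by positivity)
      rw [← mul_le_mul_iff_right₀ hkμ', ← Real.norm_of_nonneg hkμ'.le, ← norm_mul, hd_succ,
        norm_mul, Real.norm_of_nonneg hkμ'.le, Real.norm_of_nonneg (by positivity), ← mul_assoc]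
      have hratio : (k + μ + 1) * c ^ 2 * ((4 + c ^ 2) / (2 * c ^ 2)) =
          (k + μ + 1) * ((4 + c ^ 2) / 2) := by
        field_simp
      rw [hratio]
      exact mul_le_mul_of_nonneg_right (by linarith) (norm_nonneg _)
  refine ⟨∑' k, ‖d k‖, fun k => ?_⟩
  calc |besselCliffordCoeff μ k| = ‖d k‖ * (c ^ (2 * k) / (2 * k)!) := by
        rw [hd, norm_div, Real.norm_of_nonneg (r := c ^ (2 * k) / _) (by positivity),
          div_mul_cancel₀ _ (by positivity), Real.norm_eq_abs]
    _ ≤ _ := by gcongr; exact hsum.norm.le_tsum k fun _ _ => norm_nonneg _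

lemma hasSum_besselClifford_majorant (C c x : ℝ) :
    HasSum (fun k : ℕ => C * (c ^ (2 * k) / (2 * k)!) * (x ^ 2) ^ k) (C * Real.cosh (c * x)) := by
  convert! (Real.hasSum_cosh (c * x)).mul_left C using 2 with k
  rw [mul_pow, pow_mul x]
  ring

lemma exists_norm_besselClifford_term_le (μ : ℝ) {c : ℝ} (hc : 2 < c) :
    ∃ C, ∀ (x : ℝ) (k : ℕ), ‖besselCliffordCoeff μ k * (x ^ 2) ^ k‖ ≤
      C * (c ^ (2 * k) / (2 * k)!) * (x ^ 2) ^ k := by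
  obtain ⟨C, hC⟩ := exists_abs_besselCliffordCoeff_le μ hc
  refine ⟨C, fun x k => ?_⟩
  rw [norm_mul, Real.norm_of_nonneg (r := (x ^ 2) ^ k) (by positivity), Real.norm_eq_abs]
  gcongr
  exact hC k

lemma summable_besselClifford (μ u : ℝ) :
    Summable fun k : ℕ => besselCliffordCoeff μ k * u ^ k := by
  obtain ⟨C, hC⟩ := exists_norm_besselClifford_term_le μ (show (2 : ℝ) < 3 by norm_num)
  have habs : Summable fun k : ℕ => ‖besselCliffordCoeff μ k * |u| ^ k‖ := by
    simpa only [Real.sq_sqrt (abs_nonneg u)] using Summable.of_nonneg_of_le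
      (fun _ => norm_nonneg _) (hC √|u|) (hasSum_besselClifford_majorant C 3 _).summable
  simpa only [norm_mul, norm_pow, Real.norm_eq_abs, abs_abs, ← abs_pow, ← abs_mul,
    summable_abs_iff] using habs

lemma exists_abs_besselClifford_sq_le (μ : ℝ) {c : ℝ} (hc : 2 < c) :
    ∃ C ≥ 0, ∀ x, |besselClifford μ (x ^ 2)| ≤ C * Real.exp (c * |x|) := by
  obtain ⟨C, hC⟩ := exists_norm_besselClifford_term_le μ hc
  have hC0 : 0 ≤ C := by simpa using (norm_nonneg _).trans (hC 0 0)
  refine ⟨C, hC0, fun x => ?_⟩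
  have hcosh : Real.cosh (c * x) ≤ Real.exp (c * |x|) := by
    have habs : |c * x| = c * |x| := by rw [abs_mul, abs_of_pos (by linarith)]
    rw [Real.cosh_eq, ← habs]
    linarith [Real.exp_le_exp.2 (le_abs_self (c * x)), Real.exp_le_exp.2 (neg_le_abs (c * x))]
  calc |besselClifford μ (x ^ 2)| ≤ C * Real.cosh (c * x) :=
        tsum_of_norm_bounded (hasSum_besselClifford_majorant C c x) (hC x)
    _ ≤ C * Real.exp (c * |x|) := by gcongr

lemma hasDerivAt_besselClifford (μ u : ℝ) :
    HasDerivAt (besselClifford μ) (besselClifford (μ + 1) u) u := by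
  set g' : ℕ → ℝ → ℝ := fun k v => besselCliffordCoeff μ k * (k * v ^ (k - 1)) with hg'
  have hg'_succ (v : ℝ) (k : ℕ) : g' (k + 1) v = besselCliffordCoeff (μ + 1) k * v ^ k := by
    rw [hg', ← succ_mul_besselCliffordCoeff_succ]
    push_cast
    ring
  have hsum (v : ℝ) : Summable fun k => g' k v := by
    rw [← summable_nat_add_iff 1]
    simpa only [hg'_succ] using summable_besselClifford (μ + 1) v
  have hbound : ∀ k, ∀ v ∈ Metric.ball (0 : ℝ) (|u| + 1), ‖g' k v‖ ≤ ‖g' k (|u| + 1)‖ := by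
    intro k v hv
    have hv : ‖v‖ ≤ ‖|u| + 1‖ := (mem_ball_zero_iff.1 hv).le.trans (le_abs_self _)
    simp only [hg', norm_mul, norm_pow]
    gcongr
  have hderiv := hasDerivAt_tsum_of_isPreconnected (hsum (|u| + 1)).norm Metric.isOpen_ball
    (convex_ball _ _).isPreconnected
    (fun k v _ => (hasDerivAt_pow k v).const_mul (besselCliffordCoeff μ k)) hbound
    (Metric.mem_ball_self (by positivity)) (summable_besselClifford μ 0)
    (show u ∈ Metric.ball 0 (|u| + 1) by simp)
  refine hderiv.congr_deriv ?_
  rw [(hsum u).tsum_eq_zero_add, besselClifford]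
  simp only [hg'_succ]
  simp only [hg', Nat.cast_zero, zero_mul, mul_zero, zero_add]

lemma continuous_besselClifford (μ : ℝ) : Continuous (besselClifford μ) :=
  continuous_iff_continuousAt.2 fun u => (hasDerivAt_besselClifford μ u).continuousAt

lemma besselClifford_eq_add (μ u : ℝ) :
    besselClifford μ u =
      (μ + 1) * besselClifford (μ + 1) u + u * besselClifford (μ + 2) u := by
  have hterm (k : ℕ) : besselCliffordCoeff μ (k + 1) * u ^ (k + 1) =
      (μ + 1) * (besselCliffordCoeff (μ + 1) (k + 1) * u ^ (k + 1)) +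
        u * (besselCliffordCoeff (μ + 2) k * u ^ k) := by
    have hcoeff := succ_mul_besselCliffordCoeff_succ (μ + 1) k
    rw [add_assoc μ, one_add_one_eq_two] at hcoeff
    rw [besselCliffordCoeff_eq_mul, ← hcoeff]
    push_cast
    ring
  have hsum := (summable_nat_add_iff 1).2 (summable_besselClifford (μ + 1) u)
  simp only [besselClifford]
  rw [(summable_besselClifford μ u).tsum_eq_zero_add,
    (summable_besselClifford (μ + 1) u).tsum_eq_zero_add, tsum_congr hterm,
    (hsum.mul_left _).tsum_add ((summable_besselClifford (μ + 2) u).mul_left u),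
    tsum_mul_left, tsum_mul_left, besselCliffordCoeff_eq_mul μ 0]
  push_cast
  ring

end BesselClifford

/-- The building blocks `s^(-p) exp(-(z² + ζ²)/(2s)) E_μ(z²ζ²/(4s²))`, `E_μ = besselClifford μ`, of
the Bessel heat kernel, extended by `0` to `s ≤ 0`. -/
noncomputable def besselGauss (p μ s z ζ : ℝ) : ℝ :=
  if 0 < s then
    s ^ (-p) * Real.exp (-(z ^ 2 + ζ ^ 2) / (2 * s)) *
      besselClifford μ (z ^ 2 * ζ ^ 2 / (4 * s ^ 2))
  else 0

/-- The effect `besselGaussDr p μ = z⁻¹ ∂_z (besselGauss p μ)` of the radial derivative `z⁻¹ ∂_z`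
on a building block. -/
noncomputable def besselGaussDr (p μ s z ζ : ℝ) : ℝ :=
  -besselGauss (p + 1) μ s z ζ + ζ ^ 2 / 2 * besselGauss (p + 2) (μ + 1) s z ζ

/-- The effect of `(z⁻¹ ∂_z)²` on `besselGauss p μ`. -/
noncomputable def besselGaussDrDr (p μ s z ζ : ℝ) : ℝ :=
  -besselGaussDr (p + 1) μ s z ζ + ζ ^ 2 / 2 * besselGaussDr (p + 2) (μ + 1) s z ζ

section BesselGauss

variable {p μ s z ζ : ℝ}

lemma besselGauss_of_nonpos (hs : s ≤ 0) : besselGauss p μ s z ζ = 0 :=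
  if_neg hs.not_gt

lemma besselGauss_of_pos (hs : 0 < s) :
    besselGauss p μ s z ζ = s ^ (-p) * Real.exp (-(z ^ 2 + ζ ^ 2) / (2 * s)) *
      besselClifford μ (z ^ 2 * ζ ^ 2 / (4 * s ^ 2)) :=
  if_pos hs

lemma besselGauss_comm (p μ s z ζ : ℝ) : besselGauss p μ s z ζ = besselGauss p μ s ζ z := by
  simp only [besselGauss, add_comm (z ^ 2), mul_comm (z ^ 2)]

lemma rpow_neg_add_natCast (hs : 0 < s) (p : ℝ) (n : ℕ) :
    s ^ (-(p + n)) = s ^ (-p) / s ^ n := by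
  rw [neg_add', Real.rpow_sub hs, Real.rpow_natCast]

lemma besselGauss_add_natCast (p μ s z ζ : ℝ) (n : ℕ) :
    besselGauss (p + n) μ s z ζ = besselGauss p μ s z ζ / s ^ n := by
  rcases le_or_gt s 0 with hs | hs
  · simp only [besselGauss_of_nonpos hs, zero_div]
  · rw [besselGauss_of_pos hs, besselGauss_of_pos hs, rpow_neg_add_natCast hs]
    ring

lemma besselGauss_add_one (p μ s z ζ : ℝ) :
    besselGauss (p + 1) μ s z ζ = besselGauss p μ s z ζ / s := by
  simpa using besselGauss_add_natCast p μ s z ζ 1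

lemma besselGauss_add_two (p μ s z ζ : ℝ) :
    besselGauss (p + 2) μ s z ζ = besselGauss p μ s z ζ / s ^ 2 := by
  simpa using besselGauss_add_natCast p μ s z ζ 2

lemma besselGauss_add_three (p μ s z ζ : ℝ) :
    besselGauss (p + 3) μ s z ζ = besselGauss p μ s z ζ / s ^ 3 := by
  simpa using besselGauss_add_natCast p μ s z ζ 3

lemma besselGauss_eq_add (p μ s z ζ : ℝ) :
    besselGauss p μ s z ζ = (μ + 1) * besselGauss p (μ + 1) s z ζ +
      z ^ 2 * ζ ^ 2 / 4 * besselGauss (p + 2) (μ + 2) s z ζ := by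
  rcases le_or_gt s 0 with hs | hs
  · simp only [besselGauss_of_nonpos hs, mul_zero, add_zero]
  · rw [besselGauss_add_two]
    simp only [besselGauss_of_pos hs]
    rw [besselClifford_eq_add μ]
    ring

lemma hasDerivAt_besselGauss_space (p μ s z ζ : ℝ) :
    HasDerivAt (besselGauss p μ s · ζ) (z * besselGaussDr p μ s z ζ) z := by
  rw [besselGaussDr, besselGauss_add_one, besselGauss_add_two]
  rcases le_or_gt s 0 with hs | hs
  · simpa only [besselGauss_of_nonpos hs, zero_div, neg_zero, mul_zero, add_zero]
      using hasDerivAt_const _ _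
  · simp only [besselGauss_of_pos hs]
    have hsq : HasDerivAt (fun w : ℝ => w ^ 2) (2 * z) z := by simpa using hasDerivAt_pow 2 z
    have hexp := ((hsq.add_const (ζ ^ 2)).fun_neg.div_const (2 * s)).exp.const_mul (s ^ (-p))
    have hClifford := (hasDerivAt_besselClifford μ (z ^ 2 * ζ ^ 2 / (4 * s ^ 2))).comp z
      ((hsq.mul_const (ζ ^ 2)).div_const (4 * s ^ 2))
    refine (hexp.mul hClifford).congr_deriv ?_
    simp only [Function.comp]
    field_simp
    ring

lemma hasDerivAt_besselGaussDr_space (p μ s z ζ : ℝ) :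
    HasDerivAt (besselGaussDr p μ s · ζ)
      (z * besselGaussDrDr p μ s z ζ) z :=
  ((hasDerivAt_besselGauss_space (p + 1) μ s z ζ).fun_neg.fun_add
    ((hasDerivAt_besselGauss_space (p + 2) (μ + 1) s z ζ).const_mul (ζ ^ 2 / 2))).congr_deriv
    (by rw [besselGaussDrDr]; ring)

lemma exists_abs_besselGauss_le (p μ : ℝ) {c : ℝ} (hc : 2 < c) :
    ∃ C ≥ 0, ∀ {s : ℝ}, 0 < s → ∀ z ζ, |besselGauss p μ s z ζ| ≤
      C * (s⁻¹ ^ p * Real.exp (-((z ^ 2 + ζ ^ 2 - c * |z * ζ|) / 2) * s⁻¹)) := by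
  obtain ⟨C, hC0, hC⟩ := exists_abs_besselClifford_sq_le μ hc
  refine ⟨C, hC0, fun {s} hs z ζ => ?_⟩
  have harg : z ^ 2 * ζ ^ 2 / (4 * s ^ 2) = (z * ζ / (2 * s)) ^ 2 := by ring
  have hexp : Real.exp (-((z ^ 2 + ζ ^ 2 - c * |z * ζ|) / 2) * s⁻¹) =
      Real.exp (-(z ^ 2 + ζ ^ 2) / (2 * s)) * Real.exp (c * |z * ζ / (2 * s)|) := by
    rw [← Real.exp_add, abs_div, abs_of_pos (show 0 < 2 * s by positivity)]
    congr 1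
    field_simp
    ring
  rw [besselGauss_of_pos hs, harg, abs_mul, abs_of_pos (by positivity), hexp,
    Real.inv_rpow hs.le, ← Real.rpow_neg hs.le]
  calc _ ≤ s ^ (-p) * Real.exp (-(z ^ 2 + ζ ^ 2) / (2 * s)) *
        (C * Real.exp (c * |z * ζ / (2 * s)|)) := by gcongr; exact hC _
    _ = _ := by ring

lemma continuousAt_besselGauss_of_pos (p μ z ζ : ℝ) (hs : 0 < s) :
    ContinuousAt (fun x : ℝ × ℝ × ℝ => besselGauss p μ x.1 x.2.1 x.2.2) (s, z, ζ) := by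
  have hpos : ∀ᶠ x : ℝ × ℝ × ℝ in 𝓝 (s, z, ζ), 0 < x.1 :=
    continuous_fst.continuousAt.eventually (lt_mem_nhds hs)
  refine ContinuousAt.congr ?_
    (hpos.mono fun x hx => (besselGauss_of_pos hx).symm)
  refine ((continuous_fst.continuousAt.rpow_const (.inl hs.ne')).mul
    (ContinuousAt.div (by fun_prop) (by fun_prop) ?_).rexp).mul
    ((continuous_besselClifford μ).continuousAt.comp
      (ContinuousAt.div (by fun_prop) (by fun_prop) ?_))
  · exact mul_ne_zero two_ne_zero hs.ne'
  · exact mul_ne_zero four_ne_zero (pow_ne_zero 2 hs.ne')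

lemma exists_two_lt_mul_abs_lt (h : z ^ 2 ≠ ζ ^ 2) : ∃ c > 2, c * |z * ζ| < z ^ 2 + ζ ^ 2 := by
  have hgap : 2 * |z * ζ| < z ^ 2 + ζ ^ 2 := by
    have : 0 < (|z| - |ζ|) ^ 2 := by
      refine sq_pos_of_ne_zero (sub_ne_zero.2 fun habs => h ?_)
      rw [← sq_abs z, habs, sq_abs]
    rw [abs_mul]
    nlinarith [sq_abs z, sq_abs ζ]
  have hnear : ∀ᶠ c in 𝓝[>] (2 : ℝ), c * |z * ζ| < z ^ 2 + ζ ^ 2 :=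
    ((continuous_mul_const _).continuousAt.eventually (gt_mem_nhds hgap)).filter_mono
      nhdsWithin_le_nhds
  exact (eventually_mem_nhdsWithin.and hnear).exists

lemma continuousAt_besselGauss_zero (p μ : ℝ) (h : z ^ 2 ≠ ζ ^ 2) :
    ContinuousAt (fun x : ℝ × ℝ × ℝ => besselGauss p μ x.1 x.2.1 x.2.2) (0, z, ζ) := by
  obtain ⟨c, hc, hcz⟩ := exists_two_lt_mul_abs_lt h
  obtain ⟨C, hC0, hC⟩ := exists_abs_besselGauss_le p μ hc
  set δ := (z ^ 2 + ζ ^ 2 - c * |z * ζ|) / 4 with hδ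
  have hδ0 : 0 < δ := by linarith
  have hlim : Tendsto (fun t : ℝ => C * (t⁻¹ ^ p * Real.exp (-δ * t⁻¹))) (𝓝[>] 0) (𝓝 0) := by
    simpa only [mul_zero, Function.comp_apply] using
      ((tendsto_rpow_mul_exp_neg_mul_atTop_nhds_zero p δ hδ0).comp
        tendsto_inv_nhdsGT_zero).const_mul C
  have hfst : Tendsto Prod.fst (𝓝[{x : ℝ × ℝ × ℝ | 0 < x.1}] (0, z, ζ)) (𝓝[>] 0) :=
    continuous_fst.continuousWithinAt.tendsto_nhdsWithin fun _ hx => hx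
  have hnear : ∀ᶠ x in 𝓝 ((0 : ℝ), z, ζ),
      δ < (x.2.1 ^ 2 + x.2.2 ^ 2 - c * |x.2.1 * x.2.2|) / 2 := by
    have hcont : Continuous fun x : ℝ × ℝ × ℝ =>
      (x.2.1 ^ 2 + x.2.2 ^ 2 - c * |x.2.1 * x.2.2|) / 2 := by fun_prop
    exact hcont.continuousAt.eventually (lt_mem_nhds (by simp only; linarith))
  rw [ContinuousAt, besselGauss_of_nonpos le_rfl,
    ← nhdsWithin_univ, ← union_compl_self {x : ℝ × ℝ × ℝ | 0 < x.1}, nhdsWithin_union]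
  refine Tendsto.sup (squeeze_zero_norm' ?_ (hlim.comp hfst)) ?_
  · filter_upwards [self_mem_nhdsWithin, hnear.filter_mono nhdsWithin_le_nhds] with x hx hxδ
    have : 0 < x.1⁻¹ := inv_pos.2 hx
    refine (hC hx _ _).trans ?_
    simp only [Function.comp]
    gcongr
  · refine tendsto_const_nhds.congr' ?_
    filter_upwards [self_mem_nhdsWithin] with x hx
    exact (besselGauss_of_nonpos (not_lt.1 hx)).symm

lemma continuousOn_besselGauss (p μ : ℝ) :
    ContinuousOn (fun x : ℝ × ℝ × ℝ => besselGauss p μ x.1 x.2.1 x.2.2)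
      {x | x.2.1 ^ 2 ≠ x.2.2 ^ 2} := by
  rintro ⟨s, z, ζ⟩ hx
  refine ContinuousAt.continuousWithinAt ?_
  rcases lt_trichotomy s 0 with hs | rfl | hs
  · refine (continuousAt_const (y := (0 : ℝ))).congr ?_
    filter_upwards [continuous_fst.continuousAt.eventually (gt_mem_nhds hs)] with x hx
    exact (besselGauss_of_nonpos hx.le).symm
  · exact continuousAt_besselGauss_zero p μ hx
  · exact continuousAt_besselGauss_of_pos p μ z ζ hs

lemma hasDerivAt_besselGauss_time_of_pos (p μ z ζ : ℝ) (hs : 0 < s) :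
    HasDerivAt (besselGauss p μ · z ζ)
      (-p * besselGauss (p + 1) μ s z ζ + (z ^ 2 + ζ ^ 2) / 2 * besselGauss (p + 2) μ s z ζ -
        z ^ 2 * ζ ^ 2 / 2 * besselGauss (p + 3) (μ + 1) s z ζ) s := by
  have hs0 : s ≠ 0 := hs.ne'
  have hpow : HasDerivAt (fun t : ℝ => t ^ (-p)) (-p * (s ^ (-p) / s)) s := by
    simpa only [Real.rpow_sub_one hs0] using Real.hasDerivAt_rpow_const (p := -p) (.inl hs0)
  have hexp := ((hasDerivAt_const s (-(z ^ 2 + ζ ^ 2))).fun_div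
    ((hasDerivAt_id' s).const_mul 2) (mul_ne_zero two_ne_zero hs0)).exp
  have hClifford := (hasDerivAt_besselClifford μ (z ^ 2 * ζ ^ 2 / (4 * s ^ 2))).comp s
    ((hasDerivAt_const s (z ^ 2 * ζ ^ 2)).fun_div ((hasDerivAt_pow 2 s).const_mul 4)
      (mul_ne_zero four_ne_zero (pow_ne_zero 2 hs0)))
  have hev : (besselGauss p μ · z ζ) =ᶠ[𝓝 s] fun t => t ^ (-p) *
      Real.exp (-(z ^ 2 + ζ ^ 2) / (2 * t)) * besselClifford μ (z ^ 2 * ζ ^ 2 / (4 * t ^ 2)) :=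
    (lt_mem_nhds hs).mono fun t ht => besselGauss_of_pos ht
  refine (((hpow.mul hexp).mul hClifford).congr_of_eventuallyEq hev).congr_deriv ?_
  rw [besselGauss_add_one, besselGauss_add_two, besselGauss_add_three]
  simp only [besselGauss_of_pos hs, Function.comp, Pi.mul_apply]
  push_cast
  field_simp
  ring

lemma hasDerivAt_besselGauss_time_zero (p μ : ℝ) (h : z ^ 2 ≠ ζ ^ 2) :
    HasDerivAt (besselGauss p μ · z ζ) 0 0 := by
  have hcont : Tendsto (besselGauss (p + 1) μ · z ζ) (𝓝[≠] 0) (𝓝 0) := by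
    have hcont₀ : Tendsto (besselGauss (p + 1) μ · z ζ) (𝓝 0)
        (𝓝 (besselGauss (p + 1) μ 0 z ζ)) := ((continuousOn_besselGauss (p + 1) μ).comp_continuous
      (f := fun t : ℝ => (t, z, ζ)) (by fun_prop) fun _ => h).tendsto 0
    rw [besselGauss_of_nonpos le_rfl] at hcont₀
    exact hcont₀.mono_left nhdsWithin_le_nhds
  refine hasDerivAt_iff_tendsto_slope.2 (hcont.congr fun t => ?_)
  rw [slope_def_field, besselGauss_of_nonpos le_rfl, sub_zero, sub_zero,
    besselGauss_add_one]

lemma hasDerivAt_besselGauss_time (p μ s : ℝ) (h : z ^ 2 ≠ ζ ^ 2) :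
    HasDerivAt (besselGauss p μ · z ζ)
      (-p * besselGauss (p + 1) μ s z ζ + (z ^ 2 + ζ ^ 2) / 2 * besselGauss (p + 2) μ s z ζ -
        z ^ 2 * ζ ^ 2 / 2 * besselGauss (p + 3) (μ + 1) s z ζ) s := by
  rcases lt_trichotomy s 0 with hs | rfl | hs
  · simp only [besselGauss_of_nonpos hs.le, mul_zero, add_zero, sub_zero]
    exact (hasDerivAt_const s (0 : ℝ)).congr_of_eventuallyEq
      ((gt_mem_nhds hs).mono fun t ht => besselGauss_of_nonpos ht.le)
  · simpa only [besselGauss_of_nonpos le_rfl, mul_zero, add_zero, sub_zero]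
      using hasDerivAt_besselGauss_time_zero p μ h
  · exact hasDerivAt_besselGauss_time_of_pos p μ z ζ hs

end BesselGauss

/-- The dipole kernel: up to the factor `2^(1/2 - b) ζ^(2b - 1)` it is the `ζ`-derivative of the
Bessel heat kernel, extended by `0` to `s ≤ 0`. -/
noncomputable def besselDipole (b s z ζ : ℝ) : ℝ :=
  2 * b * besselGauss (b + 1 / 2) (b - 1 / 2) s z ζ -
    ζ ^ 2 * besselGauss (b + 1 / 2 + 1) (b - 1 / 2) s z ζ +
    z ^ 2 * (ζ ^ 2 / 2 * besselGauss (b + 1 / 2 + 2) (b - 1 / 2 + 1) s z ζ)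

/-- The effect of the radial derivative `z⁻¹ ∂_z` on `besselDipole b`. -/
noncomputable def besselDipoleDr (b s z ζ : ℝ) : ℝ :=
  2 * b * besselGaussDr (b + 1 / 2) (b - 1 / 2) s z ζ -
    ζ ^ 2 * besselGaussDr (b + 1 / 2 + 1) (b - 1 / 2) s z ζ +
    (ζ ^ 2 * besselGauss (b + 1 / 2 + 2) (b - 1 / 2 + 1) s z ζ +
      z ^ 2 * (ζ ^ 2 / 2 * besselGaussDr (b + 1 / 2 + 2) (b - 1 / 2 + 1) s z ζ))

/-- The effect of `(z⁻¹ ∂_z)²` on `besselDipole b`. -/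
noncomputable def besselDipoleDrDr (b s z ζ : ℝ) : ℝ :=
  2 * b * besselGaussDrDr (b + 1 / 2) (b - 1 / 2) s z ζ -
    ζ ^ 2 * besselGaussDrDr (b + 1 / 2 + 1) (b - 1 / 2) s z ζ +
    (2 * ζ ^ 2 * besselGaussDr (b + 1 / 2 + 2) (b - 1 / 2 + 1) s z ζ +
      z ^ 2 * (ζ ^ 2 / 2 * besselGaussDrDr (b + 1 / 2 + 2) (b - 1 / 2 + 1) s z ζ))

/-- `G` is a family of solutions `(s, z) ↦ G s z ζ` of the Bessel heat equation, defined off the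
diagonal `z² = ζ²` and vanishing for `s ≤ 0`. The functions `G₁` and `G₂` stand for `D G` and
`D² G`, where `D = z⁻¹ ∂_z`; in terms of `D` the operator `½ ∂_z² + (b/z) ∂_z` is
`(b + ½) D + ½ z² D²`, free of division by `z`. -/
structure IsCausalBesselSolution (b : ℝ) (G G₁ G₂ : ℝ → ℝ → ℝ → ℝ) : Prop where
  eq_zero_of_nonpos {s : ℝ} (hs : s ≤ 0) (z ζ : ℝ) : G s z ζ = 0
  continuousOn : ContinuousOn (fun x : ℝ × ℝ × ℝ => G x.1 x.2.1 x.2.2) {x | x.2.1 ^ 2 ≠ x.2.2 ^ 2}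
  continuousOn₁ :
    ContinuousOn (fun x : ℝ × ℝ × ℝ => G₁ x.1 x.2.1 x.2.2) {x | x.2.1 ^ 2 ≠ x.2.2 ^ 2}
  continuousOn₂ :
    ContinuousOn (fun x : ℝ × ℝ × ℝ => G₂ x.1 x.2.1 x.2.2) {x | x.2.1 ^ 2 ≠ x.2.2 ^ 2}
  hasDerivAt_space (s : ℝ) {z ζ : ℝ} (h : z ^ 2 ≠ ζ ^ 2) :
    HasDerivAt (G s · ζ) (z * G₁ s z ζ) z
  hasDerivAt_space₁ (s : ℝ) {z ζ : ℝ} (h : z ^ 2 ≠ ζ ^ 2) :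
    HasDerivAt (G₁ s · ζ) (z * G₂ s z ζ) z
  hasDerivAt_time (s : ℝ) {z ζ : ℝ} (h : z ^ 2 ≠ ζ ^ 2) :
    HasDerivAt (G · z ζ) ((b + 1 / 2) * G₁ s z ζ + 1 / 2 * z ^ 2 * G₂ s z ζ) s

section BesselDipole

variable {b s z ζ : ℝ}

lemma besselDipole_of_nonpos (hs : s ≤ 0) : besselDipole b s z ζ = 0 := by
  simp only [besselDipole, besselGauss_of_nonpos hs, mul_zero, sub_zero, add_zero]

lemma hasDerivAt_besselDipole_space (b s z ζ : ℝ) :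
    HasDerivAt (besselDipole b s · ζ) (z * besselDipoleDr b s z ζ) z := by
  refine ((((hasDerivAt_besselGauss_space _ _ s z ζ).const_mul (2 * b)).fun_sub
    ((hasDerivAt_besselGauss_space _ _ s z ζ).const_mul (ζ ^ 2))).fun_add
    ((hasDerivAt_pow 2 z).fun_mul
      ((hasDerivAt_besselGauss_space _ _ s z ζ).const_mul (ζ ^ 2 / 2)))).congr_deriv ?_
  rw [besselDipoleDr]
  push_cast
  ring

lemma hasDerivAt_besselDipoleDr_space (b s z ζ : ℝ) :
    HasDerivAt (besselDipoleDr b s · ζ) (z * besselDipoleDrDr b s z ζ) z := by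
  refine ((((hasDerivAt_besselGaussDr_space _ _ s z ζ).const_mul (2 * b)).fun_sub
    ((hasDerivAt_besselGaussDr_space _ _ s z ζ).const_mul (ζ ^ 2))).fun_add
    (((hasDerivAt_besselGauss_space _ _ s z ζ).const_mul (ζ ^ 2)).fun_add
      ((hasDerivAt_pow 2 z).fun_mul
        ((hasDerivAt_besselGaussDr_space _ _ s z ζ).const_mul (ζ ^ 2 / 2))))).congr_deriv ?_
  rw [besselDipoleDrDr]
  push_cast
  ring

lemma hasDerivAt_besselDipole_time (b s : ℝ) (h : z ^ 2 ≠ ζ ^ 2) :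
    HasDerivAt (besselDipole b · z ζ)
      ((b + 1 / 2) * besselDipoleDr b s z ζ + 1 / 2 * z ^ 2 * besselDipoleDrDr b s z ζ) s := by
  refine ((((hasDerivAt_besselGauss_time _ _ s h).const_mul (2 * b)).fun_sub
    ((hasDerivAt_besselGauss_time _ _ s h).const_mul (ζ ^ 2))).fun_add
    (((hasDerivAt_besselGauss_time _ _ s h).const_mul (ζ ^ 2 / 2)).const_mul
      (z ^ 2))).congr_deriv ?_
  simp only [besselDipoleDr, besselDipoleDrDr, besselGaussDrDr, besselGaussDr,
    besselGauss_add_one, besselGauss_add_two, besselGauss_add_three]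
  rw [besselGauss_eq_add _ (b - 1 / 2), besselGauss_eq_add _ (b - 1 / 2 + 1),
    besselGauss_add_two, besselGauss_add_two]
  simp only [← one_add_one_eq_two, ← add_assoc]
  ring

lemma isCausalBesselSolution_besselDipole (b : ℝ) :
    IsCausalBesselSolution b (besselDipole b) (besselDipoleDr b) (besselDipoleDrDr b) where
  eq_zero_of_nonpos hs _ _ := besselDipole_of_nonpos hs
  continuousOn := by
    have hcont := continuousOn_besselGauss
    simp only [besselDipole]
    fun_prop
  continuousOn₁ := by
    have hcont := continuousOn_besselGauss
    simp only [besselDipoleDr, besselGaussDr]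
    fun_prop
  continuousOn₂ := by
    have hcont := continuousOn_besselGauss
    simp only [besselDipoleDrDr, besselGaussDrDr, besselGaussDr]
    fun_prop
  hasDerivAt_space s z ζ _ := hasDerivAt_besselDipole_space b s z ζ
  hasDerivAt_space₁ s z ζ _ := hasDerivAt_besselDipoleDr_space b s z ζ
  hasDerivAt_time s _ _ h := hasDerivAt_besselDipole_time b s h

end BesselDipole

/-- The layer potential with kernel `G` and density `P` on the part `k ∈ [0, M]` of the moving
boundary `y`. The upper limit `M` does not depend on the time `t`. -/
noncomputable def layerPotential (P y : ℝ → ℝ) (M : ℝ) (G : ℝ → ℝ → ℝ → ℝ) (t z : ℝ) : ℝ :=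
  ∫ k in (0 : ℝ)..M, P k * G (t - k) z (y k)

/-- The points `z` that avoid both `y` and its mirror image `-y` on `[0, M]`. -/
def offLayer (y : ℝ → ℝ) (M : ℝ) : Set ℝ :=
  {z | ∀ k ∈ [[0, M]], z ^ 2 ≠ y k ^ 2}

section LayerPotential

variable {P y : ℝ → ℝ} {M : ℝ} {G G' : ℝ → ℝ → ℝ → ℝ} {t z : ℝ}

lemma isOpen_offLayer (hy : ContinuousOn y [[0, M]]) : IsOpen (offLayer y M) := by
  have hpre : offLayer y M = (· ^ 2) ⁻¹' ((fun k => y k ^ 2) '' [[0, M]])ᶜ := by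
    ext z
    simp only [offLayer, mem_ofPred_eq, mem_preimage, mem_compl_iff, mem_image, not_exists, not_and,
      ne_comm, ne_eq]
  rw [hpre]
  exact (isCompact_uIcc.image_of_continuousOn (hy.pow 2)).isClosed.isOpen_compl.preimage
    (continuous_pow 2)

lemma continuousOn_layerIntegrand (hP : ContinuousOn P [[0, M]]) (hy : ContinuousOn y [[0, M]])
    (hG : ContinuousOn (fun x : ℝ × ℝ × ℝ => G x.1 x.2.1 x.2.2) {x | x.2.1 ^ 2 ≠ x.2.2 ^ 2}) :
    ContinuousOn (fun x : (ℝ × ℝ) × ℝ => P x.2 * G (x.1.1 - x.2) x.1.2 (y x.2))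
      ((univ ×ˢ offLayer y M) ×ˢ [[0, M]]) := by
  have hy' : ContinuousOn (fun x : (ℝ × ℝ) × ℝ => y x.2) ((univ ×ˢ offLayer y M) ×ˢ [[0, M]]) :=
    hy.comp continuousOn_snd fun x hx => hx.2
  refine (hP.comp continuousOn_snd fun x hx => hx.2).mul
    (hG.comp (f := fun x : (ℝ × ℝ) × ℝ => (x.1.1 - x.2, x.1.2, y x.2))
      (.prodMk (by fun_prop) (.prodMk (by fun_prop) hy')) fun x hx => hx.1.2 x.2 hx.2)

lemma continuousOn_layerIntegrand_time (hP : ContinuousOn P [[0, M]])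
    (hy : ContinuousOn y [[0, M]])
    (hG : ContinuousOn (fun x : ℝ × ℝ × ℝ => G x.1 x.2.1 x.2.2) {x | x.2.1 ^ 2 ≠ x.2.2 ^ 2})
    (hz : z ∈ offLayer y M) :
    ContinuousOn (Function.uncurry fun t k => P k * G (t - k) z (y k)) (univ ×ˢ [[0, M]]) :=
  (continuousOn_layerIntegrand hP hy hG).comp
    (f := fun x : ℝ × ℝ => ((x.1, z), x.2)) (by fun_prop) fun _ hx => ⟨⟨hx.1, hz⟩, hx.2⟩

lemma continuousOn_layerIntegrand_space (hP : ContinuousOn P [[0, M]])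
    (hy : ContinuousOn y [[0, M]])
    (hG : ContinuousOn (fun x : ℝ × ℝ × ℝ => G x.1 x.2.1 x.2.2) {x | x.2.1 ^ 2 ≠ x.2.2 ^ 2})
    (t : ℝ) :
    ContinuousOn (Function.uncurry fun z k => P k * G (t - k) z (y k))
      (offLayer y M ×ˢ [[0, M]]) :=
  (continuousOn_layerIntegrand hP hy hG).comp
    (f := fun x : ℝ × ℝ => ((t, x.1), x.2)) (by fun_prop) fun _ hx => ⟨⟨mem_univ _, hx.1⟩, hx.2⟩

lemma continuousOn_layerIntegrand_source (hP : ContinuousOn P [[0, M]])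
    (hy : ContinuousOn y [[0, M]])
    (hG : ContinuousOn (fun x : ℝ × ℝ × ℝ => G x.1 x.2.1 x.2.2) {x | x.2.1 ^ 2 ≠ x.2.2 ^ 2})
    (hz : z ∈ offLayer y M) (t : ℝ) :
    ContinuousOn (fun k => P k * G (t - k) z (y k)) [[0, M]] :=
  (continuousOn_layerIntegrand_space hP hy hG t).uncurry_left z hz

lemma continuous_layerPotential_time (hP : ContinuousOn P [[0, M]]) (hy : ContinuousOn y [[0, M]])
    (hG : ContinuousOn (fun x : ℝ × ℝ × ℝ => G x.1 x.2.1 x.2.2) {x | x.2.1 ^ 2 ≠ x.2.2 ^ 2})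
    (hz : z ∈ offLayer y M) : Continuous (layerPotential P y M G · z) :=
  continuousOn_univ.1 <| continuousOn_intervalIntegral_of_continuousOn isOpen_univ
    (continuousOn_layerIntegrand_time hP hy hG hz)

lemma continuousOn_layerPotential_space (hP : ContinuousOn P [[0, M]])
    (hy : ContinuousOn y [[0, M]])
    (hG : ContinuousOn (fun x : ℝ × ℝ × ℝ => G x.1 x.2.1 x.2.2) {x | x.2.1 ^ 2 ≠ x.2.2 ^ 2})
    (t : ℝ) : ContinuousOn (layerPotential P y M G t) (offLayer y M) :=
  continuousOn_intervalIntegral_of_continuousOn (isOpen_offLayer hy)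
    (continuousOn_layerIntegrand_space hP hy hG t)

lemma hasDerivAt_layerPotential_time (hP : ContinuousOn P [[0, M]]) (hy : ContinuousOn y [[0, M]])
    (hG : ContinuousOn (fun x : ℝ × ℝ × ℝ => G x.1 x.2.1 x.2.2) {x | x.2.1 ^ 2 ≠ x.2.2 ^ 2})
    (hG' : ContinuousOn (fun x : ℝ × ℝ × ℝ => G' x.1 x.2.1 x.2.2) {x | x.2.1 ^ 2 ≠ x.2.2 ^ 2})
    (hderiv : ∀ s z ζ, z ^ 2 ≠ ζ ^ 2 → HasDerivAt (G · z ζ) (G' s z ζ) s)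
    (hz : z ∈ offLayer y M) (t : ℝ) :
    HasDerivAt (layerPotential P y M G · z) (layerPotential P y M G' t z) t :=
  hasDerivAt_intervalIntegral_of_continuousOn isOpen_univ
    (fun t _ => continuousOn_layerIntegrand_source hP hy hG hz t)
    (continuousOn_layerIntegrand_time hP hy hG' hz)
    (fun t _ k hk => ((hderiv (t - k) z (y k) (hz k hk)).comp_sub_const t k).const_mul (P k))
    (mem_univ t)

lemma hasDerivAt_layerPotential_space (hP : ContinuousOn P [[0, M]])
    (hy : ContinuousOn y [[0, M]])
    (hG : ContinuousOn (fun x : ℝ × ℝ × ℝ => G x.1 x.2.1 x.2.2) {x | x.2.1 ^ 2 ≠ x.2.2 ^ 2})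
    (hG' : ContinuousOn (fun x : ℝ × ℝ × ℝ => G' x.1 x.2.1 x.2.2) {x | x.2.1 ^ 2 ≠ x.2.2 ^ 2})
    (hderiv : ∀ s z ζ, z ^ 2 ≠ ζ ^ 2 → HasDerivAt (G s · ζ) (z * G' s z ζ) z) (t : ℝ)
    (hz : z ∈ offLayer y M) :
    HasDerivAt (layerPotential P y M G t) (z * layerPotential P y M G' t z) z := by
  have hzG' : ContinuousOn (fun x : ℝ × ℝ × ℝ => x.2.1 * G' x.1 x.2.1 x.2.2)
      {x | x.2.1 ^ 2 ≠ x.2.2 ^ 2} := by fun_prop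
  refine (hasDerivAt_intervalIntegral_of_continuousOn (isOpen_offLayer hy)
    (fun z hz => continuousOn_layerIntegrand_source hP hy hG hz t)
    (continuousOn_layerIntegrand_space (G := fun s z ζ => z * G' s z ζ) hP hy hzG' t)
    (fun z hz k hk => (hderiv (t - k) z (y k) (hz k hk)).const_mul (P k)) hz).congr_deriv ?_
  simp only [layerPotential, mul_left_comm (P _) z, intervalIntegral.integral_const_mul]

lemma layerPotential_const_mul_add_const_mul (hP : ContinuousOn P [[0, M]])
    (hy : ContinuousOn y [[0, M]])
    (hG : ContinuousOn (fun x : ℝ × ℝ × ℝ => G x.1 x.2.1 x.2.2) {x | x.2.1 ^ 2 ≠ x.2.2 ^ 2})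
    (hG' : ContinuousOn (fun x : ℝ × ℝ × ℝ => G' x.1 x.2.1 x.2.2) {x | x.2.1 ^ 2 ≠ x.2.2 ^ 2})
    (c c' : ℝ → ℝ) (hz : z ∈ offLayer y M) :
    layerPotential P y M (fun s z ζ => c z * G s z ζ + c' z * G' s z ζ) t z =
      c z * layerPotential P y M G t z + c' z * layerPotential P y M G' t z := by
  simp only [layerPotential, ← intervalIntegral.integral_const_mul]
  rw [← intervalIntegral.integral_add]
  · simp only [mul_add, mul_left_comm (P _)]
  · exact ((continuousOn_layerIntegrand_source hP hy hG hz t).const_mul _).intervalIntegrable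
  · exact ((continuousOn_layerIntegrand_source hP hy hG' hz t).const_mul _).intervalIntegrable

end LayerPotential

namespace IsCausalBesselSolution

variable {b M t z : ℝ} {G G₁ G₂ : ℝ → ℝ → ℝ → ℝ} {P y : ℝ → ℝ}

-- Since `G` vanishes for `s ≤ 0`, the future boundary `k > t` does not contribute.
lemma integral_eq_layerPotential (hG : IsCausalBesselSolution b G G₁ G₂) (P y : ℝ → ℝ)
    (ht : t ∈ Icc 0 M) (z : ℝ) :
    ∫ k in (0 : ℝ)..t, P k * G (t - k) z (y k) = layerPotential P y M G t z := by
  rw [layerPotential, intervalIntegral.integral_of_le ht.1,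
    intervalIntegral.integral_of_le (ht.1.trans ht.2)]
  refine (setIntegral_eq_of_subset_of_forall_sdiff_eq_zero measurableSet_Ioc
    (Ioc_subset_Ioc_right ht.2) fun k hk => ?_).symm
  have hkt : t < k := not_le.1 fun hkt => hk.2 ⟨hk.1.1, hkt⟩
  rw [hG.eq_zero_of_nonpos (sub_nonpos.2 hkt.le), mul_zero]

lemma hasDerivAt_layerPotential_time (hG : IsCausalBesselSolution b G G₁ G₂)
    (hP : ContinuousOn P [[0, M]]) (hy : ContinuousOn y [[0, M]]) (hz : z ∈ offLayer y M)
    (t : ℝ) : HasDerivAt (layerPotential P y M G · z)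
      ((b + 1 / 2) * layerPotential P y M G₁ t z +
        1 / 2 * z ^ 2 * layerPotential P y M G₂ t z) t := by
  have hG₁ := hG.continuousOn₁
  have hG₂ := hG.continuousOn₂
  rw [← layerPotential_const_mul_add_const_mul hP hy hG₁ hG₂ (fun _ => b + 1 / 2)
    (fun z => 1 / 2 * z ^ 2) hz]
  exact _root_.hasDerivAt_layerPotential_time hP hy hG.continuousOn (by fun_prop)
    (fun s z ζ h => hG.hasDerivAt_time s h) hz t

lemma contDiff_layerPotential_time (hG : IsCausalBesselSolution b G G₁ G₂)
    (hP : ContinuousOn P [[0, M]]) (hy : ContinuousOn y [[0, M]]) (hz : z ∈ offLayer y M) :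
    ContDiff ℝ 1 (layerPotential P y M G · z) := by
  have hcont₁ := continuous_layerPotential_time hP hy hG.continuousOn₁ hz
  have hcont₂ := continuous_layerPotential_time hP hy hG.continuousOn₂ hz
  rw [← contDiffOn_univ]
  refine contDiffOn_succ_of_hasDerivAt (n := 0) isOpen_univ
    (fun t _ => hG.hasDerivAt_layerPotential_time hP hy hz t) ?_
  exact contDiffOn_zero.2 (by fun_prop)

lemma hasDerivAt_layerPotential_space (hG : IsCausalBesselSolution b G G₁ G₂)
    (hP : ContinuousOn P [[0, M]]) (hy : ContinuousOn y [[0, M]]) (t : ℝ)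
    (hz : z ∈ offLayer y M) :
    HasDerivAt (layerPotential P y M G t) (z * layerPotential P y M G₁ t z) z :=
  _root_.hasDerivAt_layerPotential_space hP hy hG.continuousOn hG.continuousOn₁
    (fun s _ _ h => hG.hasDerivAt_space s h) t hz

lemma hasDerivAt_mul_layerPotential_space (hG : IsCausalBesselSolution b G G₁ G₂)
    (hP : ContinuousOn P [[0, M]]) (hy : ContinuousOn y [[0, M]]) (t : ℝ)
    (hz : z ∈ offLayer y M) :
    HasDerivAt (fun w => w * layerPotential P y M G₁ t w)
      (layerPotential P y M G₁ t z + z ^ 2 * layerPotential P y M G₂ t z) z :=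
  ((hasDerivAt_id' z).fun_mul (_root_.hasDerivAt_layerPotential_space hP hy hG.continuousOn₁
    hG.continuousOn₂ (fun s _ _ h => hG.hasDerivAt_space₁ s h) t hz)).congr_deriv (by ring)

lemma contDiffOn_layerPotential_space (hG : IsCausalBesselSolution b G G₁ G₂)
    (hP : ContinuousOn P [[0, M]]) (hy : ContinuousOn y [[0, M]]) (t : ℝ) :
    ContDiffOn ℝ 2 (layerPotential P y M G t) (offLayer y M) := by
  have hcont₁ := continuousOn_layerPotential_space hP hy hG.continuousOn₁ t
  have hcont₂ := continuousOn_layerPotential_space hP hy hG.continuousOn₂ t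
  refine contDiffOn_succ_of_hasDerivAt (n := 1) (isOpen_offLayer hy)
    (fun z hz => hG.hasDerivAt_layerPotential_space hP hy t hz) ?_
  refine contDiffOn_succ_of_hasDerivAt (n := 0) (isOpen_offLayer hy)
    (fun z hz => hG.hasDerivAt_mul_layerPotential_space hP hy t hz) ?_
  exact contDiffOn_zero.2 (by fun_prop)

lemma layerPotential_solves_pde (hG : IsCausalBesselSolution b G G₁ G₂)
    (hP : ContinuousOn P [[0, M]]) (hy : ContinuousOn y [[0, M]]) (t : ℝ) (hz₀ : z ≠ 0)
    (hz : z ∈ offLayer y M) :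
    deriv (layerPotential P y M G · z) t =
      1 / 2 * deriv (deriv (layerPotential P y M G t)) z +
        b / z * deriv (layerPotential P y M G t) z := by
  have hderiv : deriv (layerPotential P y M G t) =ᶠ[𝓝 z] fun w => w * layerPotential P y M G₁ t w :=
    ((isOpen_offLayer hy).eventually_mem hz).mono fun w hw =>
      (hG.hasDerivAt_layerPotential_space hP hy t hw).deriv
  rw [(hG.hasDerivAt_layerPotential_time hP hy hz t).deriv, hderiv.deriv_eq, hderiv.eq_of_nhds,
    (hG.hasDerivAt_mul_layerPotential_space hP hy t hz).deriv]
  field_simp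
  ring

lemma solves_pde_of_eq_layerPotential {q : ℝ → ℝ → ℝ} (hG : IsCausalBesselSolution b G G₁ G₂)
    (hP : ContinuousOn P [[0, M]]) (hy : ContinuousOn y [[0, M]])
    (hq : ∀ t ∈ Icc 0 M, ∀ w > 0, q t w = layerPotential P y M G t w) (ht : t ∈ Ioo 0 M)
    (hz₀ : 0 < z) (hz : z ∈ offLayer y M) :
    ContDiffAt ℝ 1 (q · z) t ∧ ContDiffAt ℝ 2 (q t) z ∧
      deriv (q · z) t = 1 / 2 * deriv (deriv (q t)) z + b / z * deriv (q t) z := by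
  have htime : (q · z) =ᶠ[𝓝 t] (layerPotential P y M G · z) := by
    filter_upwards [Icc_mem_nhds ht.1 ht.2] with t' ht' using hq t' ht' z hz₀
  have hspace : q t =ᶠ[𝓝 z] layerPotential P y M G t := by
    filter_upwards [lt_mem_nhds hz₀] with w hw using hq t (Ioo_subset_Icc_self ht) w hw
  refine ⟨(hG.contDiff_layerPotential_time hP hy hz).contDiffAt.congr_of_eventuallyEq htime,
    ((hG.contDiffOn_layerPotential_space hP hy t).contDiffAt
      ((isOpen_offLayer hy).mem_nhds hz)).congr_of_eventuallyEq hspace, ?_⟩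
  rw [htime.deriv_eq, hspace.deriv.deriv_eq, hspace.deriv_eq]
  exact hG.layerPotential_solves_pde hP hy t hz₀.ne' hz

end IsCausalBesselSolution

/-- The density `2^(1/2 - b) Ψ(k) y(k)^(2b - 1)` against which the kernel `besselDipole b` is
integrated to give the Bessel potential with density `Ψ`. -/
noncomputable def dipoleDensity (b : ℝ) (y Ψ : ℝ → ℝ) (k : ℝ) : ℝ :=
  Ψ k * (2 ^ (1 / 2 - b) * y k ^ (2 * b - 1))

section BesselKernel

variable {b s z ζ : ℝ}

lemma besselI_eq_rpow_mul_besselClifford (ν : ℝ) {x : ℝ} (hx : 0 < x) :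
    besselI ν x = (x / 2) ^ ν * besselClifford ν ((x / 2) ^ 2) := by
  rw [besselI, besselClifford, ← tsum_mul_left]
  refine tsum_congr fun k => ?_
  have hpow : (x / 2) ^ (2 * (k : ℝ)) = ((x / 2) ^ 2) ^ k := by
    rw [← pow_mul, ← Real.rpow_natCast]
    push_cast
    rfl
  rw [Real.rpow_add (by positivity), hpow, besselCliffordCoeff]
  ring

lemma besselKernel_prefactor_eq (b : ℝ) (hs : 0 < s) (hz : 0 < z) (hζ : 0 < ζ) :
    √(z * ζ) / s * (ζ / z) ^ b * (z * ζ / s / 2) ^ (b - 1 / 2) =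
      2 ^ (1 / 2 - b) * ζ ^ (2 * b) * s ^ (-(b + 1 / 2)) := by
  have hsqrt : √(z * ζ) ≠ 0 := by positivity
  refine Real.log_injOn_pos (mem_Ioi.2 (by positivity)) (mem_Ioi.2 (by positivity)) ?_
  rw [Real.log_mul (by positivity) (by positivity), Real.log_mul (by positivity) (by positivity),
    Real.log_mul (by positivity) (by positivity), Real.log_mul (by positivity) (by positivity),
    Real.log_rpow (by positivity), Real.log_rpow (by positivity), Real.log_rpow two_pos,
    Real.log_rpow hζ, Real.log_rpow hs, Real.log_div hsqrt hs.ne', Real.log_sqrt (by positivity),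
    Real.log_div hζ.ne' hz.ne', Real.log_div (by positivity) two_ne_zero,
    Real.log_div (by positivity) hs.ne', Real.log_mul hz.ne' hζ.ne']
  ring

lemma besselKernel_eq_besselGauss (b : ℝ) (hs : 0 < s) (hz : 0 < z) (hζ : 0 < ζ) :
    besselKernel b s z ζ =
      2 ^ (1 / 2 - b) * (ζ ^ (2 * b) * besselGauss (b + 1 / 2) (b - 1 / 2) s z ζ) := by
  have harg : (z * ζ / s / 2) ^ 2 = z ^ 2 * ζ ^ 2 / (4 * s ^ 2) := by ring
  rw [besselKernel, besselI_eq_rpow_mul_besselClifford _ (by positivity), harg,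
    besselGauss_of_pos hs]
  linear_combination (Real.exp (-(z ^ 2 + ζ ^ 2) / (2 * s)) *
    besselClifford (b - 1 / 2) (z ^ 2 * ζ ^ 2 / (4 * s ^ 2))) *
      besselKernel_prefactor_eq b hs hz hζ

lemma deriv_besselKernel (b : ℝ) (hs : 0 ≤ s) (hz : 0 < z) (hζ : 0 < ζ) :
    deriv (besselKernel b s z) ζ = 2 ^ (1 / 2 - b) * ζ ^ (2 * b - 1) * besselDipole b s z ζ := by
  rcases hs.eq_or_lt with rfl | hs
  · have hkernel : besselKernel b 0 z = fun _ => 0 := by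
      ext x
      simp only [besselKernel, div_zero, zero_mul]
    rw [hkernel, deriv_const, besselDipole_of_nonpos le_rfl, mul_zero]
  · have hkernel : besselKernel b s z =ᶠ[𝓝 ζ] fun x =>
        2 ^ (1 / 2 - b) * (x ^ (2 * b) * besselGauss (b + 1 / 2) (b - 1 / 2) s x z) := by
      filter_upwards [lt_mem_nhds hζ] with x hx
      rw [besselKernel_eq_besselGauss b hs hz hx, besselGauss_comm]
    have hderiv := ((Real.hasDerivAt_rpow_const (p := 2 * b) (.inl hζ.ne')).fun_mul
      (hasDerivAt_besselGauss_space (b + 1 / 2) (b - 1 / 2) s ζ z)).const_mul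
        ((2 : ℝ) ^ (1 / 2 - b))
    have hrpow : ζ ^ (2 * b) = ζ ^ (2 * b - 1) * ζ := by
      rw [Real.rpow_sub_one hζ.ne', div_mul_cancel₀ _ hζ.ne']
    rw [hkernel.deriv_eq, hderiv.deriv, besselDipole, besselGaussDr, besselGauss_comm _ _ _ ζ,
      besselGauss_comm _ _ _ ζ, besselGauss_comm _ _ _ ζ, hrpow]
    ring

end BesselKernel

section BesselPotential

variable {b T τ M z : ℝ} {y Ψ : ℝ → ℝ}

lemma mul_deriv_besselKernel_eq (b : ℝ) (Ψ : ℝ → ℝ) (hypos : ∀ k ∈ Icc 0 τ, 0 < y k) (hz : 0 < z) :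
    EqOn (fun k => Ψ k * deriv (besselKernel b (τ - k) z) (y k))
      (fun k => dipoleDensity b y Ψ k * besselDipole b (τ - k) z (y k)) (Icc 0 τ) := by
  intro k hk
  simp only [dipoleDensity, deriv_besselKernel b (sub_nonneg.2 hk.2) hz (hypos k hk)]
  ring

lemma continuousOn_dipoleDensity (b : ℝ) {K : Set ℝ} (hy : ContinuousOn y K)
    (hypos : ∀ k ∈ K, 0 < y k) (hΨ : ContinuousOn Ψ K) : ContinuousOn (dipoleDensity b y Ψ) K :=
  hΨ.mul (continuousOn_const.mul (hy.rpow_const fun k hk => .inl (hypos k hk).ne'))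

lemma mem_offLayer_of_forall_ne (hM : 0 ≤ M) (hypos : ∀ k ∈ Icc 0 M, 0 < y k) (hz : 0 < z)
    (hne : ∀ k ∈ Icc 0 M, y k ≠ z) : z ∈ offLayer y M := by
  intro k hk
  rw [uIcc_of_le hM] at hk
  exact fun hsq => hne k hk ((pow_left_inj₀ hz.le (hypos k hk).le two_ne_zero).1 hsq).symm

lemma exists_mem_Ioc_mem_offLayer (hy : ContinuousOn y (Icc 0 T)) (hτ : τ ∈ Ioo 0 T)
    (hz : z ∈ offLayer y τ) : ∃ M ∈ Ioc τ T, z ∈ offLayer y M := by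
  have hnear : {k | z ^ 2 ≠ y k ^ 2} ∈ 𝓝[≥] τ := mem_nhdsWithin_of_mem_nhds <|
    ((hy.continuousAt (Icc_mem_nhds hτ.1 hτ.2)).pow 2).eventually_ne
      (hz τ right_mem_uIcc).symm |>.mono fun k => Ne.symm
  obtain ⟨u, hu, huτ⟩ := mem_nhdsGE_iff_exists_Icc_subset.1 hnear
  have hM : τ < min u T := lt_min hu hτ.2
  refine ⟨min u T, ⟨hM, min_le_right _ _⟩, fun k hk => ?_⟩
  rw [uIcc_of_le (hτ.1.trans hM).le] at hk
  rcases le_total k τ with hkτ | hkτ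
  · exact hz k (by rw [uIcc_of_le hτ.1.le]; exact ⟨hk.1, hkτ⟩)
  · exact huτ ⟨hkτ, hk.2.trans (min_le_left _ _)⟩

lemma continuousOn_mul_deriv_besselKernel (b : ℝ) (hy : ContinuousOn y (Icc 0 τ))
    (hypos : ∀ k ∈ Icc 0 τ, 0 < y k) (hΨ : ContinuousOn Ψ (Icc 0 τ)) (hτ : 0 ≤ τ) (hz : 0 < z)
    (hzy : z ∈ offLayer y τ) :
    ContinuousOn (fun k => Ψ k * deriv (besselKernel b (τ - k) z) (y k)) (Icc 0 τ) := by
  refine ContinuousOn.congr ?_ (mul_deriv_besselKernel_eq b Ψ hypos hz)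
  have hP := continuousOn_dipoleDensity b hy hypos hΨ
  rw [← uIcc_of_le hτ] at hy hP ⊢
  exact continuousOn_layerIntegrand_source hP hy
    (isCausalBesselSolution_besselDipole b).continuousOn hzy τ

lemma tendsto_mul_deriv_besselKernel (b : ℝ) (hy : ContinuousOn y (Icc 0 τ))
    (hypos : ∀ k ∈ Icc 0 τ, 0 < y k) (hΨ : ContinuousOn Ψ (Icc 0 τ)) (hτ : 0 < τ) (hz : 0 < z)
    (hzy : z ∈ offLayer y τ) :
    Tendsto (fun k => Ψ k * deriv (besselKernel b (τ - k) z) (y k)) (𝓝[<] τ) (𝓝 0) := by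
  have hlim := continuousOn_mul_deriv_besselKernel b hy hypos hΨ hτ.le hz hzy τ
    (right_mem_Icc.2 hτ.le)
  have hzero : Ψ τ * deriv (besselKernel b (τ - τ) z) (y τ) = 0 := by
    rw [sub_self, deriv_besselKernel b le_rfl hz (hypos τ (right_mem_Icc.2 hτ.le)),
      besselDipole_of_nonpos le_rfl, mul_zero, mul_zero]
  rw [ContinuousWithinAt, hzero, nhdsWithin_Icc_eq_nhdsLE hτ] at hlim
  exact hlim.mono_left (nhdsWithin_mono τ Iio_subset_Iic_self)

lemma integral_mul_deriv_besselKernel (b : ℝ) (Ψ : ℝ → ℝ) (hypos : ∀ k ∈ Icc 0 M, 0 < y k)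
    (hτ : τ ∈ Icc 0 M) (hz : 0 < z) :
    ∫ k in (0 : ℝ)..τ, Ψ k * deriv (besselKernel b (τ - k) z) (y k) =
      layerPotential (dipoleDensity b y Ψ) y M (besselDipole b) τ z := by
  rw [← (isCausalBesselSolution_besselDipole b).integral_eq_layerPotential _ _ hτ]
  refine intervalIntegral.integral_congr fun k hk => ?_
  rw [uIcc_of_le hτ.1] at hk
  exact mul_deriv_besselKernel_eq b Ψ (fun k hk => hypos k ⟨hk.1, hk.2.trans hτ.2⟩) hz hk

end BesselPotential

theorem bessel_potential_solves_pde_general (b T : ℝ) (y Ψ : ℝ → ℝ)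
    (hy : ContinuousOn y (Icc 0 T)) (hypos : ∀ k ∈ Icc 0 T, 0 < y k)
    (hΨ : ContinuousOn Ψ (Icc 0 T)) (q : ℝ → ℝ → ℝ)
    (hq : ∀ τ z, q τ z = ∫ k in (0 : ℝ)..τ, Ψ k * deriv (besselKernel b (τ - k) z) (y k))
    (τ z : ℝ) (hτ : τ ∈ Ioc 0 T) (hz : 0 < z) (hzy : ∀ k ∈ Icc 0 τ, y k ≠ z) :
    IntervalIntegrable (fun k => Ψ k * deriv (besselKernel b (τ - k) z) (y k)) volume 0 τ ∧
    Tendsto (fun k => Ψ k * deriv (besselKernel b (τ - k) z) (y k)) (𝓝[<] τ) (𝓝 0) ∧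
    (τ < T → ContDiffAt ℝ 1 (q · z) τ ∧ ContDiffAt ℝ 2 (q τ) z ∧
      deriv (q · z) τ = 1 / 2 * deriv (deriv (q τ)) z + b / z * deriv (q τ) z) := by
  have hyτ := hy.mono (Icc_subset_Icc_right hτ.2)
  have hΨτ := hΨ.mono (Icc_subset_Icc_right hτ.2)
  have hyposτ : ∀ k ∈ Icc 0 τ, 0 < y k := fun k hk => hypos k (Icc_subset_Icc_right hτ.2 hk)
  have hoff : z ∈ offLayer y τ := mem_offLayer_of_forall_ne hτ.1.le hyposτ hz hzy
  refine ⟨(continuousOn_mul_deriv_besselKernel b hyτ hyposτ hΨτ hτ.1.le hz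
      hoff).intervalIntegrable_of_Icc hτ.1.le,
    tendsto_mul_deriv_besselKernel b hyτ hyposτ hΨτ hτ.1 hz hoff, fun hτT => ?_⟩
  obtain ⟨M, hM, hoffM⟩ := exists_mem_Ioc_mem_offLayer hy ⟨hτ.1, hτT⟩ hoff
  have hsub : Icc 0 M ⊆ Icc 0 T := Icc_subset_Icc_right hM.2
  have hP := (continuousOn_dipoleDensity b hy hypos hΨ).mono hsub
  rw [← uIcc_of_le (hτ.1.trans hM.1).le] at hP hsub
  exact (isCausalBesselSolution_besselDipole b).solves_pde_of_eq_layerPotential hP (hy.mono hsub)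
    (fun t ht w hw => (hq t w).trans <| integral_mul_deriv_besselKernel b Ψ
      (fun k hk => hypos k (Icc_subset_Icc_right hM.2 hk)) ht hw)
    ⟨hτ.1, hM.1⟩ hz hoffM

/-- the single-layer Bessel potential
`q(τ,z) = ∫_0^τ Ψ(k)·[∂q_{τ−k}(z,ζ,b)/∂ζ]|_{ζ=y(k)} dk` is well defined (the
integrand extends continuously by 0 at `k = τ`), and above the moving boundary it
is C¹ in `τ`, C² in `z` and solves the Bessel PDE. -/
theorem bessel_potential_solves_pde
    (b T' : ℝ) (hb : 1 / 2 ≤ b) (hT' : 0 < T')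
    (y Ψ : ℝ → ℝ)
    (hy : ContinuousOn y (Set.Icc 0 T'))
    (hypos : ∀ k ∈ Set.Icc (0 : ℝ) T', 0 < y k)
    (hΨ : ContinuousOn Ψ (Set.Icc 0 T'))
    (q : ℝ → ℝ → ℝ)
    (hq : ∀ τ z, q τ z =
      ∫ k in (0 : ℝ)..τ, Ψ k * deriv (fun ζ => besselKernel b (τ - k) z ζ) (y k))
    (τ z : ℝ) (hτ : τ ∈ Set.Ioc 0 T') (hz : ∀ k ∈ Set.Icc (0 : ℝ) τ, y k < z) :
    IntervalIntegrable
      (fun k => Ψ k * deriv (fun ζ => besselKernel b (τ - k) z ζ) (y k))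
      MeasureTheory.volume 0 τ
    ∧ Filter.Tendsto
        (fun k => Ψ k * deriv (fun ζ => besselKernel b (τ - k) z ζ) (y k))
        (nhdsWithin τ (Set.Iio τ)) (nhds 0)
    ∧ ∀ τ' z' : ℝ, τ' ∈ Set.Ioo 0 T' → (∀ k ∈ Set.Icc (0 : ℝ) τ', y k < z') →
        ContDiffAt ℝ 1 (fun t => q t z') τ' ∧
        ContDiffAt ℝ 2 (fun w => q τ' w) z' ∧
        deriv (fun t => q t z') τ'
          = 1 / 2 * deriv (fun w => deriv (fun w' => q τ' w') w) z'
            + b / z' * deriv (fun w => q τ' w) z' := by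
  have main (τ z : ℝ) (hτ : τ ∈ Ioc 0 T') (hz : ∀ k ∈ Icc 0 τ, y k < z) :=
    bessel_potential_solves_pde_general b T' y Ψ hy hypos hΨ q hq τ z hτ
      ((hypos 0 ⟨le_rfl, hT'.le⟩).trans (hz 0 ⟨le_rfl, hτ.1.le⟩)) fun k hk => (hz k hk).ne
  exact ⟨(main τ z hτ hz).1, (main τ z hτ hz).2.1,
    fun τ' z' hτ' hz' => (main τ' z' (Ioo_subset_Ioc_self hτ') hz').2.2 hτ'.2⟩
end

section
/- Let b ≥ 1/2, T̃ > 0, let y : [0,T̃] → (0,∞) be continuously differentiable and let Ψ : [0,T̃] → ℝ be continuous. With the Bessel heat kernel q_s(z,ζ,b) = (√(zζ)/s)·(ζ/z)^b·exp(−(z²+ζ²)/(2s))·I_{b−1/2}(zζ/s), define for τ ∈ (0,T̃] and z > 0 with z ≠ y(τ) the Bessel potential q(τ,z) = ∫_0^τ Ψ(k)·[∂q_{τ−k}(z,ζ,b)/∂ζ]|_{ζ=y(k)} dk. Then the improper integral ∫_0^τ Ψ(k)·[∂q_{τ−k}(y(τ),ζ,b)/∂ζ]|_{ζ=y(k)}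 dk converges, and the one-sided limit of q(τ,z) as z → y(τ) from above satisfies lim_{z→y(τ)⁺} q(τ,z) = Ψ(τ) + ∫_0^τ Ψ(k)·[∂q_{τ−k}(y(τ),ζ,b)/∂ζ]|_{ζ=y(k)} dk. -/
/-!
Write `Y = y τ` and let `s = τ - k` be the time remaining. The `ζ`-derivative of the kernel splits
into a regular part plus `(z - Y) / s * q_s(z, ζ)`. Since `|y k - Y| ≤ L * s`, the regular part is
bounded by `C / √s` uniformly in `z ≥ Y`, so its integral converges to the value at `z = Y`, where
the singular part vanishes. For `z = Y + d` the singular part equals the first-passage density of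
Brownian motion through level `d` times a bounded weight tending to `1` as `d, s → 0`; the density
has unit mass and concentrates at `s = 0`, which produces the jump `Ψ τ`. Both bounds rest on
`√x * exp (-x) * I_{b - 1/2}(x)` being bounded with a limit at infinity; Poisson's integral turns
this function into the Laplace transform of a beta weight, to which Watson's lemma applies.
-/

open Set Filter Topology MeasureTheory
open scoped Real

/-! ### Laplace transforms of beta weights -/

lemma integral_rpow_mul_one_sub_rpow {p r : ℝ} (hp : 0 < p) (hr : 0 < r) :
    ∫ u in (0 : ℝ)..1, u ^ (p - 1) * (1 - u) ^ (r - 1) = ProbabilityTheory.beta p r := by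
  rw [ProbabilityTheory.beta_eq_betaIntegralReal p r hp hr, Complex.betaIntegral,
    ← Complex.ofReal_re (∫ u in (0 : ℝ)..1, _), ← intervalIntegral.integral_ofReal]
  congr 1
  refine intervalIntegral.integral_congr fun u hu => ?_
  rw [uIcc_of_le zero_le_one] at hu
  push_cast [Complex.ofReal_cpow hu.1, Complex.ofReal_cpow (sub_nonneg.2 hu.2)]
  rfl

lemma intervalIntegrable_rpow_mul_one_sub_rpow {p r : ℝ} (hp : 0 < p) (hr : 0 < r) :
    IntervalIntegrable (fun u : ℝ => u ^ (p - 1) * (1 - u) ^ (r - 1)) volume 0 1 :=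
  intervalIntegral.intervalIntegrable_of_integral_ne_zero <|
    (integral_rpow_mul_one_sub_rpow hp hr).trans_ne (ProbabilityTheory.beta_pos hp hr).ne'

/-- The Laplace transform of the beta weight `u ^ (p - 1) * (1 - u) ^ (r - 1)` on `(0, 1)`, through
which the Bessel function `besselI (b - 1 / 2)` is represented (with `p = r = b`). -/
noncomputable def betaLaplace (p r x : ℝ) : ℝ :=
  ∫ u in (0 : ℝ)..1, u ^ (p - 1) * (1 - u) ^ (r - 1) * Real.exp (-(x * u))

lemma intervalIntegrable_betaLaplace {p r : ℝ} (hp : 0 < p) (hr : 0 < r) (x : ℝ) :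
    IntervalIntegrable (fun u : ℝ => u ^ (p - 1) * (1 - u) ^ (r - 1) * Real.exp (-(x * u)))
      volume 0 1 :=
  (intervalIntegrable_rpow_mul_one_sub_rpow hp hr).mul_continuousOn (by fun_prop)

lemma rpow_mul_one_sub_rpow_nonneg {u : ℝ} (hu : u ∈ Icc (0 : ℝ) 1) (p r : ℝ) :
    0 ≤ u ^ p * (1 - u) ^ r :=
  mul_nonneg (Real.rpow_nonneg hu.1 p) (Real.rpow_nonneg (sub_nonneg.2 hu.2) r)

lemma betaLaplace_nonneg (p r x : ℝ) : 0 ≤ betaLaplace p r x :=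
  intervalIntegral.integral_nonneg zero_le_one fun _ hu =>
    mul_nonneg (rpow_mul_one_sub_rpow_nonneg hu _ _) (Real.exp_pos _).le

lemma antitone_betaLaplace {p r : ℝ} (hp : 0 < p) (hr : 0 < r) : Antitone (betaLaplace p r) := by
  intro x x' hx
  refine intervalIntegral.integral_mono_on zero_le_one (intervalIntegrable_betaLaplace hp hr x')
    (intervalIntegrable_betaLaplace hp hr x) fun u hu => ?_
  have := hu.1
  have := rpow_mul_one_sub_rpow_nonneg hu (p - 1) (r - 1)
  gcongr

lemma hasDerivAt_betaLaplace {p r : ℝ} (hp : 0 < p) (hr : 0 < r) (x : ℝ) :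
    HasDerivAt (betaLaplace p r) (-betaLaplace (p + 1) r x) x := by
  have hmeas (f : ℝ → ℝ) (hf : Continuous f) : AEStronglyMeasurable
      (fun u => u ^ (p - 1) * (1 - u) ^ (r - 1) * f u) (volume.restrict (uIoc 0 1)) :=
    ((intervalIntegrable_rpow_mul_one_sub_rpow hp hr).mul_continuousOn
      hf.continuousOn).def'.aestronglyMeasurable
  refine (intervalIntegral.hasDerivAt_integral_of_dominated_loc_of_deriv_le
    (F := fun x u => u ^ (p - 1) * (1 - u) ^ (r - 1) * Real.exp (-(x * u)))
    (F' := fun x u => u ^ (p - 1) * (1 - u) ^ (r - 1) * (Real.exp (-(x * u)) * -u))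
    (bound := fun u => u ^ (p - 1) * (1 - u) ^ (r - 1) * Real.exp (-((x - 1) * u)))
    (Metric.ball_mem_nhds x one_pos) (.of_forall fun x' => hmeas _ (by fun_prop))
    (intervalIntegrable_betaLaplace hp hr x) (hmeas _ (by fun_prop))
    (.of_forall fun u hu x' hx' => ?_) (intervalIntegrable_betaLaplace hp hr (x - 1))
    (.of_forall fun u _ x' _ => ?_)).2.congr_deriv ?_
  · rw [uIoc_of_le zero_le_one] at hu
    have hweight := rpow_mul_one_sub_rpow_nonneg ⟨hu.1.le, hu.2⟩ (p - 1) (r - 1)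
    have hx := (abs_lt.1 (Metric.mem_ball.1 hx')).1
    have hu0 := hu.1
    rw [norm_mul, Real.norm_of_nonneg hweight, norm_mul, norm_neg, Real.norm_of_nonneg hu0.le,
      Real.norm_of_nonneg (Real.exp_pos _).le]
    refine mul_le_mul_of_nonneg_left ?_ hweight
    refine (mul_le_of_le_one_right (Real.exp_pos _).le hu.2).trans ?_
    gcongr
    linarith
  · exact (hasDerivAt_mul_const u).fun_neg.exp.const_mul _
  · rw [betaLaplace, ← intervalIntegral.integral_neg]
    refine intervalIntegral.integral_congr_Ioo_of_le zero_le_one fun u hu => ?_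
    rw [show p + 1 - 1 = p - 1 + 1 by ring, Real.rpow_add_one hu.1.ne']
    ring

lemma hasDerivAt_rpow_mul_betaLaplace {p r x : ℝ} (hp : 0 < p) (hr : 0 < r) (hx : 0 < x) :
    HasDerivAt (fun x => x ^ p * betaLaplace p r x)
      ((p * (x ^ p * betaLaplace p r x) - x ^ (p + 1) * betaLaplace (p + 1) r x) / x) x := by
  refine ((Real.hasDerivAt_rpow_const (Or.inl hx.ne')).mul
    (hasDerivAt_betaLaplace hp hr x)).congr_deriv ?_
  rw [Real.rpow_sub_one hx.ne', Real.rpow_add_one hx.ne']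
  field_simp
  ring

lemma integral_gammaPDFReal_one {p : ℝ} (hp : 0 < p) :
    ∫ v, ProbabilityTheory.gammaPDFReal p 1 v = 1 := by
  have h := ProbabilityTheory.lintegral_gammaPDF_eq_one hp one_pos
  rw [integral_eq_lintegral_of_nonneg_ae
    (.of_forall (ProbabilityTheory.gammaPDFReal_nonneg hp one_pos))
    (ProbabilityTheory.measurable_gammaPDFReal p 1).aestronglyMeasurable]
  exact congrArg ENNReal.toReal h

lemma tendsto_norm_mul_gammaPDFReal_one (p : ℝ) :
    Tendsto (fun v => ‖v‖ * ProbabilityTheory.gammaPDFReal p 1 v) (Bornology.cobounded ℝ)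
      (𝓝 0) := by
  rw [IsOrderBornology.cobounded_eq, tendsto_sup]
  constructor
  · refine tendsto_const_nhds.congr' ?_
    filter_upwards [eventually_lt_atBot 0] with v hv
    rw [ProbabilityTheory.gammaPDFReal, if_neg hv.not_ge, mul_zero]
  · have hlim := (tendsto_rpow_mul_exp_neg_mul_atTop_nhds_zero p 1 one_pos).const_mul
      (1 / Real.Gamma p)
    rw [mul_zero] at hlim
    refine hlim.congr' ?_
    filter_upwards [eventually_gt_atTop 0] with v hv
    rw [ProbabilityTheory.gammaPDFReal, if_pos hv.le, Real.norm_of_nonneg hv.le,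
      Real.rpow_sub_one hv.ne', Real.one_rpow, neg_one_mul, one_mul]
    field_simp

/-- The leading term of Watson's lemma: the gamma densities, rescaled by `x`, form an approximate
identity at `0`. -/
lemma tendsto_rpow_mul_integral_rpow_mul_exp_neg {p : ℝ} (hp : 0 < p) {g : ℝ → ℝ}
    (hg : Integrable g) (hg0 : ContinuousAt g 0) :
    Tendsto (fun x => x ^ p * ∫ u in Ioi (0 : ℝ), u ^ (p - 1) * Real.exp (-(x * u)) * g u) atTop
      (𝓝 (Real.Gamma p * g 0)) := by
  have hpeak := (tendsto_integral_comp_smul_smul_of_integrable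
    (ProbabilityTheory.gammaPDFReal_nonneg hp one_pos) (integral_gammaPDFReal_one hp)
    (by simpa using tendsto_norm_mul_gammaPDFReal_one p) hg hg0).const_mul (Real.Gamma p)
  refine hpeak.congr' ?_
  filter_upwards [eventually_gt_atTop 0] with x hx
  rw [← integral_const_mul, ← integral_const_mul, ← integral_Ici_eq_integral_Ioi,
    ← integral_indicator measurableSet_Ici]
  refine integral_congr_ae (.of_forall fun u => ?_)
  dsimp only
  by_cases hu : 0 ≤ u
  · rw [indicator_of_mem (mem_Ici.2 hu), ProbabilityTheory.gammaPDFReal,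
      if_pos (by simpa using mul_nonneg hx.le hu)]
    simp only [Module.finrank_self, pow_one, Real.one_rpow, smul_eq_mul, one_mul,
      Real.mul_rpow hx.le hu, Real.rpow_sub_one hx.ne']
    field_simp
  · rw [indicator_of_notMem (by simpa using hu), ProbabilityTheory.gammaPDFReal,
      if_neg (by simpa using mul_neg_of_pos_of_neg hx (not_le.1 hu))]
    simp

lemma tendsto_rpow_mul_betaLaplace {p r : ℝ} (hp : 0 < p) (hr : 0 < r) :
    Tendsto (fun x => x ^ p * betaLaplace p r x) atTop (𝓝 (Real.Gamma p)) := by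
  set g : ℝ → ℝ := (Ioo (-1) 1).indicator fun u => (1 - u) ^ (r - 1)
  have hg : Integrable g := by
    rw [integrable_indicator_iff measurableSet_Ioo,
      ← intervalIntegrable_iff_integrableOn_Ioo_of_le (by norm_num)]
    have hpow := (intervalIntegral.intervalIntegrable_rpow' (a := 1 - -1) (b := 1 - 1)
      (by linarith : -1 < r - 1)).comp_sub_left 1
    simpa only [sub_sub_cancel] using hpow
  have hmem : Ioo (-1 : ℝ) 1 ∈ 𝓝 0 := Ioo_mem_nhds (by norm_num) one_pos
  have hg0 : ContinuousAt g 0 := by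
    have hcont : ContinuousAt (fun u : ℝ => (1 - u) ^ (r - 1)) 0 :=
      (by fun_prop : ContinuousAt (fun u : ℝ => 1 - u) 0).rpow_const (by norm_num)
    exact hcont.congr (eventuallyEq_of_mem hmem (eqOn_indicator (f := _)).symm)
  have hgval : g 0 = 1 := by simp [g]
  have hlim := tendsto_rpow_mul_integral_rpow_mul_exp_neg hp hg hg0
  rw [hgval, mul_one] at hlim
  refine hlim.congr fun x => ?_
  rw [betaLaplace, intervalIntegral.integral_of_le zero_le_one, integral_Ioc_eq_integral_Ioo,
    ← integral_indicator measurableSet_Ioo, ← integral_indicator measurableSet_Ioi]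
  congr 2
  ext u
  by_cases hu0 : 0 < u <;> by_cases hu1 : u < 1
  · have hu : -1 < u := by linarith
    simp [g, hu0, hu1, hu]
    ring
  all_goals simp [g, hu0, hu1]

lemma exists_rpow_mul_betaLaplace_le {p r : ℝ} (hp : 0 < p) (hr : 0 < r) :
    ∃ C, ∀ x, 0 < x → x ^ p * betaLaplace p r x ≤ C := by
  obtain ⟨X, hX⟩ := eventually_atTop.1 ((eventually_gt_atTop 0).and
    ((tendsto_rpow_mul_betaLaplace hp hr).eventually_le_const (lt_add_one _)))
  refine ⟨max (Real.Gamma p + 1) (X ^ p * betaLaplace p r 0), fun x hx => ?_⟩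
  rcases le_total X x with hXx | hxX
  · exact le_max_of_le_left (hX x hXx).2
  · exact le_max_of_le_right <| mul_le_mul (Real.rpow_le_rpow hx.le hxX hp.le)
      (antitone_betaLaplace hp hr hx.le) (betaLaplace_nonneg _ _ _)
      (Real.rpow_nonneg (hX X le_rfl).1.le p)

/-! ### Poisson's integral for the Bessel function -/

lemma integral_beta_weight_mul_pow {b : ℝ} (hb : 0 < b) (k : ℕ) :
    ∫ u in (0 : ℝ)..1, u ^ (b - 1) * (1 - u) ^ (b - 1) * (1 - 2 * u) ^ (2 * k) =
      2 ^ (1 - 2 * b) * Real.Gamma (k + 1 / 2) * Real.Gamma b / Real.Gamma (k + 1 / 2 + b) := by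
  induction k generalizing b with
  | zero =>
    have hdup := Real.Gamma_mul_Gamma_add_half b
    have hΓ := Real.Gamma_pos_of_pos (by positivity : 0 < b + 1 / 2)
    have hΓ' := Real.Gamma_pos_of_pos (by positivity : 0 < 2 * b)
    simp only [mul_zero, pow_zero, mul_one, Nat.cast_zero, zero_add, Real.Gamma_one_half_eq,
      integral_rpow_mul_one_sub_rpow hb hb, ProbabilityTheory.beta, ← two_mul]
    rw [add_comm (1 / 2), div_eq_div_iff hΓ'.ne' hΓ.ne', mul_assoc, hdup]
    ring
  | succ k ih =>
    have hint {c : ℝ} (hc : 0 < c) :=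
      (intervalIntegrable_rpow_mul_one_sub_rpow hc hc).mul_continuousOn
        (by fun_prop : ContinuousOn (fun u : ℝ => (1 - 2 * u) ^ (2 * k)) (uIcc 0 1))
    have hrec : ∫ u in (0 : ℝ)..1, u ^ (b - 1) * (1 - u) ^ (b - 1) * (1 - 2 * u) ^ (2 * (k + 1)) =
        (∫ u in (0 : ℝ)..1, u ^ (b - 1) * (1 - u) ^ (b - 1) * (1 - 2 * u) ^ (2 * k)) -
        4 * ∫ u in (0 : ℝ)..1,
          u ^ (b + 1 - 1) * (1 - u) ^ (b + 1 - 1) * (1 - 2 * u) ^ (2 * k) := by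
      rw [← intervalIntegral.integral_const_mul, ← intervalIntegral.integral_sub (hint hb)
        ((hint (by positivity : 0 < b + 1)).const_mul 4)]
      refine intervalIntegral.integral_congr_Ioo_of_le zero_le_one fun u hu => ?_
      rw [show b + 1 - 1 = b - 1 + 1 by ring, Real.rpow_add_one hu.1.ne',
        Real.rpow_add_one (sub_pos.2 hu.2).ne']
      ring
    have hk : (k : ℝ) + 1 / 2 ≠ 0 := by positivity
    have hpow : (2 : ℝ) ^ (1 - 2 * (b + 1)) = 2 ^ (1 - 2 * b) / 4 := by
      rw [show 1 - 2 * (b + 1) = 1 - 2 * b - (2 : ℕ) by push_cast; ring,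
        Real.rpow_sub_natCast two_ne_zero]
      norm_num
    rw [hrec, ih hb, ih (by positivity), hpow, Real.Gamma_add_one hb.ne', Nat.cast_succ,
      add_right_comm (k : ℝ) 1, Real.Gamma_add_one hk, ← add_assoc,
      add_right_comm _ 1 b, Real.Gamma_add_one (by positivity)]
    field_simp
    ring

lemma exp_mul_betaLaplace_two_mul {b : ℝ} (hb : 0 < b) (x : ℝ) :
    Real.exp x * betaLaplace b b (2 * x) =
      ∫ u in (0 : ℝ)..1, u ^ (b - 1) * (1 - u) ^ (b - 1) * Real.cosh (x * (1 - 2 * u)) := by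
  have hweight := intervalIntegrable_rpow_mul_one_sub_rpow hb hb
  have hexp : Real.exp x * betaLaplace b b (2 * x) =
      ∫ u in (0 : ℝ)..1, u ^ (b - 1) * (1 - u) ^ (b - 1) * Real.exp (x * (1 - 2 * u)) := by
    rw [betaLaplace, ← intervalIntegral.integral_const_mul]
    congr 1 with u
    rw [show x * (1 - 2 * u) = x + -(2 * x * u) by ring, Real.exp_add]
    ring
  have hreflect : Real.exp x * betaLaplace b b (2 * x) =
      ∫ u in (0 : ℝ)..1, u ^ (b - 1) * (1 - u) ^ (b - 1) * Real.exp (-(x * (1 - 2 * u))) := by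
    have hcomp := intervalIntegral.integral_comp_sub_left (a := 0) (b := 1)
      (fun u => u ^ (b - 1) * (1 - u) ^ (b - 1) * Real.exp (x * (1 - 2 * u))) 1
    rw [sub_self, sub_zero, ← hexp] at hcomp
    rw [← hcomp]
    congr 1 with u
    ring_nf
  rw [← add_self_div_two (Real.exp x * _)]
  nth_rw 1 [hexp]
  rw [hreflect, ← intervalIntegral.integral_add (hweight.mul_continuousOn (by fun_prop))
    (hweight.mul_continuousOn (by fun_prop)), ← intervalIntegral.integral_div]
  congr 1 with u
  rw [Real.cosh_eq]
  ring

lemma hasSum_exp_mul_betaLaplace_two_mul {b : ℝ} (hb : 0 < b) (x : ℝ) :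
    HasSum (fun k : ℕ => x ^ (2 * k) / (2 * k).factorial *
        (2 ^ (1 - 2 * b) * Real.Gamma (k + 1 / 2) * Real.Gamma b / Real.Gamma (k + 1 / 2 + b)))
      (Real.exp x * betaLaplace b b (2 * x)) := by
  have hweight := intervalIntegrable_rpow_mul_one_sub_rpow hb hb
  simp_rw [exp_mul_betaLaplace_two_mul hb, ← integral_beta_weight_mul_pow hb,
    ← intervalIntegral.integral_const_mul]
  refine intervalIntegral.hasSum_integral_of_dominated_convergence
    (fun k u => u ^ (b - 1) * (1 - u) ^ (b - 1) * (x ^ (2 * k) / (2 * k).factorial))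
    (fun k => ((hweight.mul_continuousOn (by fun_prop)).const_mul _).def'.aestronglyMeasurable)
    (fun k => .of_forall fun u hu => ?_)
    (.of_forall fun u _ => (Real.hasSum_cosh x).summable.mul_left _) ?_
    (.of_forall fun u _ => ?_)
  · rw [uIoc_of_le zero_le_one] at hu
    have hω := rpow_mul_one_sub_rpow_nonneg ⟨hu.1.le, hu.2⟩ (b - 1) (b - 1)
    have hx : 0 ≤ x ^ (2 * k) / (2 * k).factorial :=
      div_nonneg ((even_two_mul k).pow_nonneg x) (by positivity)
    have hpow : |1 - 2 * u| ^ (2 * k) ≤ 1 :=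
      pow_le_one₀ (abs_nonneg _) (abs_le.2 ⟨by linarith [hu.2], by linarith [hu.1]⟩)
    rw [norm_mul, Real.norm_of_nonneg hx, norm_mul, Real.norm_of_nonneg hω, norm_pow,
      Real.norm_eq_abs, mul_comm]
    exact mul_le_mul_of_nonneg_right (mul_le_of_le_one_right hω hpow) hx
  · simp_rw [tsum_mul_left]
    exact hweight.mul_const _
  · have hcosh := (Real.hasSum_cosh (x * (1 - 2 * u))).mul_left (u ^ (b - 1) * (1 - u) ^ (b - 1))
    refine hcosh.congr_fun fun k => ?_
    rw [mul_pow]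
    ring

lemma Gamma_nat_add_half_div_factorial (k : ℕ) :
    Real.Gamma (k + 1 / 2) / (2 * k).factorial = √π / (2 ^ (2 * k) * k.factorial) := by
  have hdup := Real.Gamma_mul_Gamma_add_half ((k : ℝ) + 1 / 2)
  rw [show (k : ℝ) + 1 / 2 + 1 / 2 = k + 1 by ring,
    show 2 * ((k : ℝ) + 1 / 2) = (2 * k : ℕ) + 1 by push_cast; ring, sub_add_cancel_right,
    Real.Gamma_nat_eq_factorial, Real.Gamma_nat_eq_factorial, Real.rpow_neg zero_le_two,
    Real.rpow_natCast] at hdup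
  field_simp at hdup ⊢
  linear_combination hdup

/-- Poisson's integral representation, with the integration variable moved to `(0, 1)`. -/
lemma besselI_eq_betaLaplace {b x : ℝ} (hb : 0 < b) (hx : 0 < x) :
    besselI (b - 1 / 2) x = (2 * x) ^ (b - 1 / 2) / (√π * Real.Gamma b) *
      (Real.exp x * betaLaplace b b (2 * x)) := by
  rw [← ((hasSum_exp_mul_betaLaplace_two_mul hb x).mul_left _).tsum_eq]
  refine tsum_congr fun k => ?_
  have hfour : (4 : ℝ) ^ (b - 1 / 2) * 2 ^ (1 - 2 * b) = 1 := by
    rw [show (4 : ℝ) = 2 ^ (2 : ℝ) by norm_num, ← Real.rpow_mul zero_le_two,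
      ← Real.rpow_add two_pos]
    ring_nf
    exact Real.rpow_zero 2
  have htwo : (2 * x) ^ (b - 1 / 2) = 4 ^ (b - 1 / 2) * (x / 2) ^ (b - 1 / 2) := by
    rw [← Real.mul_rpow zero_le_four (by positivity)]
    ring_nf
  have hpow : (x / 2) ^ (2 * (k : ℝ) + (b - 1 / 2)) =
      x ^ (2 * k) / 2 ^ (2 * k) * (x / 2) ^ (b - 1 / 2) := by
    rw [Real.rpow_add (by positivity), ← div_pow, ← Real.rpow_natCast, Nat.cast_mul, Nat.cast_two]
  calc (x / 2) ^ (2 * (k : ℝ) + (b - 1 / 2)) /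
        (k.factorial * Real.Gamma (k + (b - 1 / 2) + 1))
      = (4 ^ (b - 1 / 2) * 2 ^ (1 - 2 * b)) * (x / 2) ^ (b - 1 / 2) / √π * x ^ (2 * k) *
          (√π / (2 ^ (2 * k) * k.factorial)) / Real.Gamma (k + 1 / 2 + b) := by
        rw [hfour, hpow, show (k : ℝ) + (b - 1 / 2) + 1 = k + 1 / 2 + b by ring]
        field_simp
    _ = _ := by
        rw [← Gamma_nat_add_half_div_factorial, htwo]
        field_simp

/-- The Bessel function of order `b - 1 / 2` stripped of its growth `exp x / √x` at infinity. -/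
noncomputable def scaledBessel (b x : ℝ) : ℝ :=
  √x * Real.exp (-x) * besselI (b - 1 / 2) x

lemma scaledBessel_eq_betaLaplace {b x : ℝ} (hb : 0 < b) (hx : 0 < x) :
    scaledBessel b x = (2 * x) ^ b * betaLaplace b b (2 * x) / (√(2 * π) * Real.Gamma b) := by
  rw [scaledBessel, besselI_eq_betaLaplace hb hx, Real.rpow_sub (by positivity),
    ← Real.sqrt_eq_rpow, Real.exp_neg, Real.sqrt_mul zero_le_two, Real.sqrt_mul zero_le_two]
  field_simp

lemma hasDerivAt_scaledBessel {b x : ℝ} (hb : 0 < b) (hx : 0 < x) :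
    HasDerivAt (scaledBessel b)
      ((b * ((2 * x) ^ b * betaLaplace b b (2 * x)) -
        (2 * x) ^ (b + 1) * betaLaplace (b + 1) b (2 * x)) / (√(2 * π) * Real.Gamma b) / x) x := by
  have hcomp := ((hasDerivAt_rpow_mul_betaLaplace hb hb (by positivity : 0 < 2 * x)).comp x
    ((hasDerivAt_id x).const_mul 2)).div_const (√(2 * π) * Real.Gamma b)
  refine (hcomp.congr_of_eventuallyEq ?_).congr_deriv ?_
  · filter_upwards [eventually_gt_nhds hx] with t ht using scaledBessel_eq_betaLaplace hb ht
  · field_simp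

lemma continuousOn_scaledBessel {b : ℝ} (hb : 0 < b) : ContinuousOn (scaledBessel b) (Ioi 0) :=
  fun _ hx => (hasDerivAt_scaledBessel hb hx).continuousAt.continuousWithinAt

lemma continuousOn_deriv_scaledBessel {b : ℝ} (hb : 0 < b) :
    ContinuousOn (deriv (scaledBessel b)) (Ioi 0) := by
  have hrpow {p : ℝ} (hp : 0 < p) : Continuous fun x : ℝ => (2 * x) ^ p :=
    (continuous_const.mul continuous_id).rpow_const fun _ => Or.inr hp.le
  have hlaplace {p : ℝ} (hp : 0 < p) : Continuous fun x => betaLaplace p b (2 * x) :=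
    (continuous_iff_continuousAt.2 fun x => (hasDerivAt_betaLaplace hp hb x).continuousAt).comp
      (continuous_const.mul continuous_id)
  refine (((((hrpow hb).mul (hlaplace hb)).const_mul b).sub
    ((hrpow (by positivity)).mul (hlaplace (by positivity)))).div_const
    (√(2 * π) * Real.Gamma b)).continuousOn.div continuousOn_id (fun x hx => (mem_Ioi.1 hx).ne')
    |>.congr fun x hx => (hasDerivAt_scaledBessel hb hx).deriv

lemma exists_abs_scaledBessel_le {b : ℝ} (hb : 0 < b) :
    ∃ C, 0 ≤ C ∧ ∀ x, 0 < x → |scaledBessel b x| ≤ C := by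
  obtain ⟨C, hC⟩ := exists_rpow_mul_betaLaplace_le hb hb
  refine ⟨|C| / (√(2 * π) * Real.Gamma b), by positivity, fun x hx => ?_⟩
  have hnonneg := betaLaplace_nonneg b b (2 * x)
  rw [scaledBessel_eq_betaLaplace hb hx, abs_of_nonneg (by positivity)]
  gcongr
  exact (hC _ (by positivity)).trans (le_abs_self C)

lemma exists_abs_mul_deriv_scaledBessel_le {b : ℝ} (hb : 0 < b) :
    ∃ C, 0 ≤ C ∧ ∀ x, 0 < x → |x * deriv (scaledBessel b) x| ≤ C := by
  obtain ⟨C, hC⟩ := exists_rpow_mul_betaLaplace_le hb hb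
  obtain ⟨C', hC'⟩ := exists_rpow_mul_betaLaplace_le (add_pos hb one_pos) hb
  refine ⟨(b * |C| + |C'|) / (√(2 * π) * Real.Gamma b), by positivity, fun x hx => ?_⟩
  have hnonneg := betaLaplace_nonneg b b (2 * x)
  have hnonneg' := betaLaplace_nonneg (b + 1) b (2 * x)
  rw [(hasDerivAt_scaledBessel hb hx).deriv, mul_div_cancel₀ _ hx.ne', abs_div,
    abs_of_pos (by positivity : 0 < √(2 * π) * Real.Gamma b)]
  gcongr
  refine (abs_sub _ _).trans (add_le_add ?_ ?_)
  · rw [abs_of_nonneg (by positivity)]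
    gcongr
    exact (hC _ (by positivity)).trans (le_abs_self C)
  · rw [abs_of_nonneg (by positivity)]
    exact (hC' _ (by positivity)).trans (le_abs_self C')

lemma tendsto_scaledBessel_atTop {b : ℝ} (hb : 0 < b) :
    Tendsto (scaledBessel b) atTop (𝓝 (√(2 * π))⁻¹) := by
  have hΓ := (Real.Gamma_pos_of_pos hb).ne'
  have hlim := ((tendsto_rpow_mul_betaLaplace hb hb).comp
    (tendsto_id.const_mul_atTop two_pos)).div_const (√(2 * π) * Real.Gamma b)
  rw [div_mul_cancel_right₀ hΓ] at hlim
  refine hlim.congr' ?_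
  filter_upwards [eventually_gt_atTop 0] with x hx using (scaledBessel_eq_betaLaplace hb hx).symm

/-! ### Splitting the derivative of the heat kernel -/

/-- The elementary factor of the Bessel heat kernel: the Brownian heat kernel weighted by
`(ζ / z) ^ b`, up to a constant. -/
noncomputable def gaussianFactor (b s z ζ : ℝ) : ℝ :=
  (√s)⁻¹ * (ζ / z) ^ b * Real.exp (-(z - ζ) ^ 2 / (2 * s))

/-- The `ζ`-derivative of the Bessel heat kernel minus its singular part `(z - Y) / s * q_s(z, ζ)`;
it stays integrable in `s` along curves `ζ = w s` issuing from `Y`, uniformly as `z → Y`. -/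
noncomputable def regularPart (b Y s z ζ : ℝ) : ℝ :=
  deriv (besselKernel b s z) ζ - (z - Y) / s * besselKernel b s z ζ

lemma besselKernel_eq_gaussianFactor_mul (b : ℝ) {s z ζ : ℝ} (hs : 0 < s) (hz : 0 < z)
    (hζ : 0 < ζ) :
    besselKernel b s z ζ = gaussianFactor b s z ζ * scaledBessel b (z * ζ / s) := by
  have hexp : Real.exp (-(z ^ 2 + ζ ^ 2) / (2 * s)) =
      Real.exp (-(z - ζ) ^ 2 / (2 * s)) * Real.exp (-(z * ζ / s)) := by
    rw [← Real.exp_add]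
    congr 1
    field_simp
    ring
  have hsqrt : √(z * ζ) / s = (√s)⁻¹ * √(z * ζ / s) := by
    rw [Real.sqrt_div (by positivity)]
    field_simp
    rw [Real.sq_sqrt hs.le]
  rw [besselKernel, gaussianFactor, scaledBessel, hexp, hsqrt]
  ring

lemma hasDerivAt_gaussianFactor (b : ℝ) {s z ζ : ℝ} (hs : 0 < s) (hz : 0 < z) (hζ : 0 < ζ) :
    HasDerivAt (gaussianFactor b s z) (gaussianFactor b s z ζ * ((z - ζ) / s + b / ζ)) ζ := by
  have hpow := ((hasDerivAt_id ζ).div_const z).rpow_const (p := b) (Or.inl (by positivity))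
  have hexp := (((((hasDerivAt_id ζ).const_sub z).fun_pow 2).fun_neg).div_const (2 * s)).exp
  refine ((hpow.const_mul (√s)⁻¹).mul hexp).congr_deriv ?_
  simp only [id_eq, gaussianFactor, Real.rpow_sub_one (by positivity : ζ / z ≠ 0)]
  field_simp
  ring

lemma hasDerivAt_besselKernel {b s z ζ : ℝ} (hb : 0 < b) (hs : 0 < s) (hz : 0 < z) (hζ : 0 < ζ) :
    HasDerivAt (besselKernel b s z)
      ((z - ζ) / s * besselKernel b s z ζ + gaussianFactor b s z ζ *
        (b * scaledBessel b (z * ζ / s) + z * ζ / s * deriv (scaledBessel b) (z * ζ / s)) / ζ)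
      ζ := by
  have hbessel : HasDerivAt (fun ζ => scaledBessel b (z * ζ / s))
      (deriv (scaledBessel b) (z * ζ / s) * (z * 1 / s)) ζ :=
    (hasDerivAt_scaledBessel hb (by positivity)).differentiableAt.hasDerivAt.comp ζ
      (((hasDerivAt_id ζ).const_mul z).div_const s)
  refine (((hasDerivAt_gaussianFactor b hs hz hζ).mul hbessel).congr_of_eventuallyEq ?_).congr_deriv
    ?_
  · filter_upwards [eventually_gt_nhds hζ] with ξ hξ
      using besselKernel_eq_gaussianFactor_mul b hs hz hξ
  · rw [besselKernel_eq_gaussianFactor_mul b hs hz hζ]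
    field_simp
    ring

lemma regularPart_eq {b s z ζ : ℝ} (hb : 0 < b) (Y : ℝ) (hs : 0 < s) (hz : 0 < z) (hζ : 0 < ζ) :
    regularPart b Y s z ζ = gaussianFactor b s z ζ *
      ((Y - ζ) / s * scaledBessel b (z * ζ / s) +
        (b * scaledBessel b (z * ζ / s) + z * ζ / s * deriv (scaledBessel b) (z * ζ / s)) / ζ) := by
  rw [regularPart, (hasDerivAt_besselKernel hb hs hz hζ).deriv,
    besselKernel_eq_gaussianFactor_mul b hs hz hζ]
  ring

section Continuity

variable {X : Type*} [TopologicalSpace X] {A : Set X} {s z ζ : X → ℝ}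

lemma continuousOn_gaussianFactor {b : ℝ} (hb : 0 ≤ b) (hs : ContinuousOn s A)
    (hz : ContinuousOn z A) (hζ : ContinuousOn ζ A) (hs0 : ∀ x ∈ A, 0 < s x)
    (hz0 : ∀ x ∈ A, 0 < z x) : ContinuousOn (fun x => gaussianFactor b (s x) (z x) (ζ x)) A :=
  ((hs.sqrt.inv₀ fun x hx => (Real.sqrt_pos.2 (hs0 x hx)).ne').mul
    ((hζ.div hz fun x hx => (hz0 x hx).ne').rpow_const fun _ _ => Or.inr hb)).mul
    (((((hz.sub hζ).pow 2).neg).div (hs.const_mul 2) fun x hx =>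
      (mul_pos two_pos (hs0 x hx)).ne').rexp)

lemma continuousOn_regularPart {b : ℝ} (hb : 0 < b) (Y : ℝ) (hs : ContinuousOn s A)
    (hz : ContinuousOn z A) (hζ : ContinuousOn ζ A) (hs0 : ∀ x ∈ A, 0 < s x)
    (hz0 : ∀ x ∈ A, 0 < z x) (hζ0 : ∀ x ∈ A, 0 < ζ x) :
    ContinuousOn (fun x => regularPart b Y (s x) (z x) (ζ x)) A := by
  have harg : ContinuousOn (fun x => z x * ζ x / s x) A :=
    (hz.mul hζ).div hs fun x hx => (hs0 x hx).ne'
  have hmaps : MapsTo (fun x => z x * ζ x / s x) A (Ioi 0) := fun x hx =>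
    div_pos (mul_pos (hz0 x hx) (hζ0 x hx)) (hs0 x hx)
  have hbessel := (continuousOn_scaledBessel hb).comp harg hmaps
  have hderiv := (continuousOn_deriv_scaledBessel hb).comp harg hmaps
  exact ((continuousOn_gaussianFactor hb.le hs hz hζ hs0 hz0).mul
    (((((continuousOn_const (c := Y)).sub hζ).div hs fun x hx => (hs0 x hx).ne').mul hbessel).add
      (((hbessel.const_mul b).add (harg.mul hderiv)).div hζ fun x hx => (hζ0 x hx).ne'))).congr
    fun x hx => regularPart_eq hb Y (hs0 x hx) (hz0 x hx) (hζ0 x hx)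

end Continuity

lemma gaussianFactor_nonneg (b s : ℝ) {z ζ : ℝ} (hz : 0 ≤ z) (hζ : 0 ≤ ζ) :
    0 ≤ gaussianFactor b s z ζ := by
  unfold gaussianFactor
  positivity

lemma gaussianFactor_le {b s z ζ m M : ℝ} (hb : 0 ≤ b) (hs : 0 < s) (hm : 0 < m) (hz : m ≤ z)
    (hmζ : m ≤ ζ) (hζM : ζ ≤ M) : gaussianFactor b s z ζ ≤ (M / m) ^ b * (√s)⁻¹ := by
  have hζ := hm.trans_le hmζ
  have hM := hζ.trans_le hζM
  have hexp : Real.exp (-(z - ζ) ^ 2 / (2 * s)) ≤ 1 :=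
    Real.exp_le_one_iff.2 (div_nonpos_of_nonpos_of_nonneg (neg_nonpos.2 (sq_nonneg _))
      (by positivity))
  have hz' := hm.trans_le hz
  rw [gaussianFactor, mul_comm (√s)⁻¹]
  refine (mul_le_of_le_one_right (by positivity) hexp).trans ?_
  gcongr

lemma exists_abs_regularPart_le {b m M L : ℝ} (hb : 0 < b) (hm : 0 < m) (hM : 0 ≤ M)
    (hL : 0 ≤ L) : ∃ C, ∀ Y s z ζ, 0 < s → m ≤ z → m ≤ ζ → ζ ≤ M → |ζ - Y| ≤ L * s →
      |regularPart b Y s z ζ| ≤ C * (√s)⁻¹ := by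
  obtain ⟨C, hC0, hC⟩ := exists_abs_scaledBessel_le hb
  obtain ⟨C', hC'0, hC'⟩ := exists_abs_mul_deriv_scaledBessel_le hb
  refine ⟨(M / m) ^ b * (L * C + (b * C + C') / m), fun Y s z ζ hs hz hmζ hζM hY => ?_⟩
  have hz0 := hm.trans_le hz
  have hζ0 := hm.trans_le hmζ
  have hx : 0 < z * ζ / s := by positivity
  rw [regularPart_eq hb Y hs hz0 hζ0, abs_mul, abs_of_nonneg
    (gaussianFactor_nonneg b s hz0.le hζ0.le), mul_right_comm]
  refine mul_le_mul (gaussianFactor_le hb.le hs hm hz hmζ hζM) ?_ (abs_nonneg _) (by positivity)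
  refine (abs_add_le _ _).trans (add_le_add ?_ ?_)
  · rw [abs_mul, abs_div, abs_sub_comm, abs_of_pos hs]
    exact mul_le_mul ((div_le_iff₀ hs).2 hY) (hC _ hx) (abs_nonneg _) hL
  · rw [abs_div, abs_of_pos hζ0]
    refine div_le_div₀ (by positivity) ?_ hm hmζ
    refine (abs_add_le _ _).trans (add_le_add ?_ (hC' _ hx))
    rw [abs_mul, abs_of_pos hb]
    gcongr
    exact hC _ hx

/-! ### Concentration of first-passage densities -/

/-- The density at time `s` of the first passage of Brownian motion through level `d`. As `d → 0+`
it concentrates at `s = 0`, which is where the jump comes from. -/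
noncomputable def levyDensity (d s : ℝ) : ℝ :=
  d / (√(2 * π) * (s * √s)) * Real.exp (-d ^ 2 / (2 * s))

lemma integral_levyDensity {d : ℝ} (hd : 0 < d) : ∫ s in Ioi 0, levyDensity d s = 1 := by
  have hinv : ∫ s in Ioi 0, levyDensity d s = ∫ t in Ioi (0 : ℝ),
      d / √(2 * π) * (t ^ ((1 / 2 : ℝ) - 1) * Real.exp (-(d ^ 2 / 2 * t))) := by
    rw [← integral_comp_rpow_Ioi _ (neg_ne_zero.2 one_ne_zero)]
    refine setIntegral_congr_fun measurableSet_Ioi fun s (hs : 0 < s) => ?_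
    simp only [levyDensity, smul_eq_mul, abs_neg, abs_one, one_mul]
    rw [Real.rpow_neg_one, Real.sqrt_inv, show (1 / 2 : ℝ) - 1 = -(1 / 2) by norm_num,
      Real.rpow_neg hs.le, ← Real.sqrt_eq_rpow, show (-1 - 1 : ℝ) = (-2 : ℤ) by norm_num,
      Real.rpow_intCast, show -d ^ 2 / (2 * s⁻¹) = -(d ^ 2 / 2 * s) by field_simp]
    have hsqrt := Real.sq_sqrt hs.le
    field_simp
    exact hsqrt
  rw [hinv, integral_const_mul, Real.integral_rpow_mul_exp_neg_mul_Ioi one_half_pos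
    (by positivity), Real.Gamma_one_half_eq, ← Real.sqrt_eq_rpow, one_div_div,
    Real.sqrt_div zero_le_two, Real.sqrt_sq hd.le, Real.sqrt_mul zero_le_two]
  field_simp

lemma integrableOn_levyDensity {d : ℝ} (hd : 0 < d) : IntegrableOn (levyDensity d) (Ioi 0) :=
  Integrable.of_integral_ne_zero ((integral_levyDensity hd).trans_ne one_ne_zero)

lemma integrableOn_levyDensity_mul {d K : ℝ} (hd : 0 < d) {A : Set ℝ} (hA : MeasurableSet A)
    (hA0 : A ⊆ Ioi 0) {f : ℝ → ℝ} (hf : AEStronglyMeasurable f (volume.restrict A))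
    (hK : ∀ s ∈ A, |f s| ≤ K) : IntegrableOn (fun s => levyDensity d s * f s) A :=
  ((integrableOn_levyDensity hd).mono_set hA0).mul_bdd hf
    ((ae_restrict_iff' hA).2 (.of_forall hK))

lemma sq_mul_levyDensity_sq_mul {d v : ℝ} (hd : 0 < d) :
    d ^ 2 * levyDensity d (d ^ 2 * v) = levyDensity 1 v := by
  rw [levyDensity, levyDensity, Real.sqrt_mul (sq_nonneg d), Real.sqrt_sq hd.le]
  have hexp : -d ^ 2 / (2 * (d ^ 2 * v)) = -1 ^ 2 / (2 * v) := by field_simp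
  rw [hexp]
  field_simp

lemma tendsto_integral_levyDensity_mul {F : ℝ → ℝ → ℝ} {K a : ℝ}
    (hmeas : ∀ᶠ d in 𝓝[>] 0, AEStronglyMeasurable (F d) (volume.restrict (Ioi 0)))
    (hbound : ∀ᶠ d in 𝓝[>] 0, ∀ s, 0 < s → |F d s| ≤ K)
    (hlim : Tendsto (Function.uncurry F) (𝓝[>] 0 ×ˢ 𝓝[>] 0) (𝓝 a)) :
    Tendsto (fun d => ∫ s in Ioi 0, levyDensity d s * F d s) (𝓝[>] 0) (𝓝 a) := by
  have hpos : ∀ᶠ d : ℝ in 𝓝[>] 0, 0 < d := self_mem_nhdsWithin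
  have hscale {d : ℝ} (hd : 0 < d) (v : ℝ) : levyDensity 1 v * F d (d ^ 2 * v) =
      d ^ 2 * (levyDensity d (d ^ 2 * v) * F d (d ^ 2 * v)) := by
    rw [← sq_mul_levyDensity_sq_mul hd, mul_assoc]
  suffices Tendsto (fun d => ∫ v in Ioi 0, levyDensity 1 v * F d (d ^ 2 * v)) (𝓝[>] 0)
      (𝓝 (∫ v in Ioi 0, levyDensity 1 v * a)) by
    rw [integral_mul_const, integral_levyDensity one_pos, one_mul] at this
    refine this.congr' ?_
    filter_upwards [hpos] with d hd
    simp_rw [hscale hd]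
    rw [integral_const_mul, integral_comp_mul_left_Ioi (fun s => levyDensity d s * F d s) 0
      (by positivity), mul_zero, smul_eq_mul, mul_inv_cancel_left₀ (by positivity)]
  have hbase : IntegrableOn (fun v => |levyDensity 1 v| * K) (Ioi 0) :=
    (integrableOn_levyDensity one_pos).abs.mul_const K
  refine tendsto_integral_filter_of_dominated_convergence _ ?_ ?_ hbase ?_
  · filter_upwards [hpos, hmeas, hbound] with d hd hd_meas hd_bound
    simp_rw [hscale hd]
    refine Integrable.aestronglyMeasurable (.const_mul ?_ _)
    refine (integrableOn_Ioi_comp_mul_left_iff (fun s => levyDensity d s * F d s) 0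
      (by positivity)).2 ?_
    rw [mul_zero]
    exact integrableOn_levyDensity_mul hd measurableSet_Ioi subset_rfl hd_meas hd_bound
  · filter_upwards [hpos, hbound] with d hd hd_bound
    refine (ae_restrict_iff' measurableSet_Ioi).2 (.of_forall fun v (hv : 0 < v) => ?_)
    rw [norm_mul]
    exact mul_le_mul_of_nonneg_left (hd_bound _ (by positivity)) (norm_nonneg _)
  · refine (ae_restrict_iff' measurableSet_Ioi).2 (.of_forall fun v (hv : 0 < v) => ?_)
    have htime : Tendsto (fun d : ℝ => d ^ 2 * v) (𝓝[>] 0) (𝓝[>] 0) := by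
      refine tendsto_nhdsWithin_iff.2 ⟨?_, hpos.mono fun d hd => mem_Ioi.2 (by positivity)⟩
      exact (Continuous.tendsto' (by fun_prop) _ _ (by simp)).mono_left nhdsWithin_le_nhds
    exact (hlim.comp (tendsto_id.prodMk htime)).const_mul _

lemma tendsto_intervalIntegral_levyDensity_mul {F : ℝ → ℝ → ℝ} {K a τ : ℝ} (hτ : 0 < τ)
    (hcont : ∀ᶠ d in 𝓝[>] 0, ContinuousOn (F d) (Ioo 0 τ))
    (hbound : ∀ᶠ d in 𝓝[>] 0, ∀ s ∈ Ioo 0 τ, |F d s| ≤ K)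
    (hlim : Tendsto (Function.uncurry F) (𝓝[>] 0 ×ˢ 𝓝[>] 0) (𝓝 a)) :
    Tendsto (fun d => ∫ s in 0..τ, levyDensity d s * F d s) (𝓝[>] 0) (𝓝 a) := by
  have hK : 0 ≤ K := by
    obtain ⟨d, hd⟩ := hbound.exists
    exact (abs_nonneg _).trans (hd (τ / 2) ⟨half_pos hτ, half_lt_self hτ⟩)
  have hIoo : ∀ᶠ s : ℝ in 𝓝[>] 0, s ∈ Ioo 0 τ := Ioo_mem_nhdsGT hτ
  refine (tendsto_integral_levyDensity_mul (F := fun d => (Ioo 0 τ).indicator (F d)) (K := K)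
    ?_ ?_ (hlim.congr' ?_)).congr fun d => ?_
  · filter_upwards [hcont] with d hd
    exact ((aestronglyMeasurable_indicator_iff measurableSet_Ioo).2
      (hd.aestronglyMeasurable measurableSet_Ioo)).restrict
  · filter_upwards [hbound] with d hd s _
    by_cases hs : s ∈ Ioo 0 τ
    · exact (congrArg abs (indicator_of_mem hs _)).trans_le (hd s hs)
    · exact (congrArg abs (indicator_of_notMem hs _)).trans_le (abs_zero.trans_le hK)
  · filter_upwards [tendsto_snd.eventually hIoo] with p hp
    exact (indicator_of_mem hp _).symm
  · rw [intervalIntegral.integral_of_le hτ.le, integral_Ioc_eq_integral_Ioo,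
      ← integral_indicator measurableSet_Ioo, ← integral_indicator measurableSet_Ioi]
    congr 1 with s
    by_cases hs : s ∈ Ioo 0 τ
    · simp [hs, hs.1]
    · simp [hs]

/-- The density, with respect to `levyDensity d`, of the singular part of the `ζ`-derivative of the
Bessel heat kernel at distance `d` above `Y`. -/
noncomputable def jumpWeight (b Y d s ζ : ℝ) : ℝ :=
  √(2 * π) * (ζ / (Y + d)) ^ b * Real.exp (d * (ζ - Y) / s - (ζ - Y) ^ 2 / (2 * s)) *
    scaledBessel b ((Y + d) * ζ / s)

lemma div_mul_besselKernel_eq_levyDensity_mul (b d : ℝ) {Y s ζ : ℝ} (hY : 0 < Y + d) (hs : 0 < s)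
    (hζ : 0 < ζ) :
    d / s * besselKernel b s (Y + d) ζ = levyDensity d s * jumpWeight b Y d s ζ := by
  have hexp : Real.exp (-(Y + d - ζ) ^ 2 / (2 * s)) =
      Real.exp (-d ^ 2 / (2 * s)) * Real.exp (d * (ζ - Y) / s - (ζ - Y) ^ 2 / (2 * s)) := by
    rw [← Real.exp_add]
    congr 1
    field_simp
    ring
  rw [besselKernel_eq_gaussianFactor_mul b hs hY hζ, gaussianFactor, levyDensity, jumpWeight, hexp]
  field_simp

lemma exists_abs_jumpWeight_le {b m M L : ℝ} (hb : 0 < b) (hm : 0 < m) (hM : 0 ≤ M) :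
    ∃ C, ∀ Y d s ζ, 0 < d → d ≤ 1 → 0 < s → m ≤ Y → m ≤ ζ → ζ ≤ M →
      |ζ - Y| ≤ L * s → |jumpWeight b Y d s ζ| ≤ C := by
  obtain ⟨C, -, hC⟩ := exists_abs_scaledBessel_le hb
  refine ⟨√(2 * π) * (M / m) ^ b * Real.exp L * C,
    fun Y d s ζ hd hd1 hs hmY hmζ hζM hζY => ?_⟩
  have hζ := hm.trans_le hmζ
  have hz : m ≤ Y + d := by linarith
  have hz0 := hm.trans_le hz
  have hexponent : d * (ζ - Y) / s - (ζ - Y) ^ 2 / (2 * s) ≤ L := by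
    have hquad : 0 ≤ (ζ - Y) ^ 2 / (2 * s) := by positivity
    have hlin : d * (ζ - Y) / s ≤ L := (div_le_iff₀ hs).2 <|
      calc d * (ζ - Y) ≤ d * |ζ - Y| := by gcongr; exact le_abs_self _
        _ ≤ |ζ - Y| := mul_le_of_le_one_left (abs_nonneg _) hd1
        _ ≤ L * s := hζY
    linarith
  rw [jumpWeight, abs_mul, abs_of_nonneg (by positivity :
    0 ≤ √(2 * π) * (ζ / (Y + d)) ^ b * Real.exp (d * (ζ - Y) / s - (ζ - Y) ^ 2 / (2 * s)))]
  gcongr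
  exact hC _ (by positivity)

lemma continuousOn_jumpWeight {b d Y : ℝ} (hb : 0 < b) (hY : 0 < Y + d) {w : ℝ → ℝ} {A : Set ℝ}
    (hA : A ⊆ Ioi 0) (hw : ContinuousOn w A) (hw0 : ∀ s ∈ A, 0 < w s) :
    ContinuousOn (fun s => jumpWeight b Y d s (w s)) A := by
  have hs0 : ∀ s ∈ A, s ≠ 0 := fun s hs => (mem_Ioi.1 (hA hs)).ne'
  have harg : ContinuousOn (fun s => (Y + d) * w s / s) A :=
    (hw.const_mul (Y + d)).div continuousOn_id hs0
  have hbessel : ContinuousOn (fun s => scaledBessel b ((Y + d) * w s / s)) A :=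
    (continuousOn_scaledBessel hb).comp harg fun s hs => div_pos (mul_pos hY (hw0 s hs)) (hA hs)
  have hexp : ContinuousOn
      (fun s => Real.exp (d * (w s - Y) / s - (w s - Y) ^ 2 / (2 * s))) A :=
    ((((hw.sub continuousOn_const).const_mul d).div continuousOn_id hs0).sub
      (((hw.sub continuousOn_const).pow 2).div (continuousOn_id.const_mul 2)
        fun s hs => mul_ne_zero two_ne_zero (hs0 s hs))).rexp
  exact (((hw.div_const _).rpow_const fun _ _ => Or.inr hb.le).const_mul _ |>.mul hexp).mul hbessel

section Limit

variable {Y L : ℝ} {w : ℝ → ℝ}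

lemma tendsto_of_eventually_abs_sub_le_mul (hw : ∀ᶠ s in 𝓝[>] 0, |w s - Y| ≤ L * s) :
    Tendsto w (𝓝[>] 0) (𝓝 Y) :=
  tendsto_iff_dist_tendsto_zero.2 <| squeeze_zero' (.of_forall fun _ => dist_nonneg) hw
    ((Continuous.tendsto' (by fun_prop) _ _ (mul_zero L)).mono_left nhdsWithin_le_nhds)

lemma tendsto_jumpWeight_exponent (hw : ∀ᶠ s in 𝓝[>] 0, |w s - Y| ≤ L * s) :
    Tendsto (fun p : ℝ × ℝ => p.1 * (w p.2 - Y) / p.2 - (w p.2 - Y) ^ 2 / (2 * p.2))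
      (𝓝[>] 0 ×ˢ 𝓝[>] 0) (𝓝 0) := by
  have hd : Tendsto Prod.fst (𝓝[>] (0 : ℝ) ×ˢ 𝓝[>] (0 : ℝ)) (𝓝 0) :=
    tendsto_fst.mono_right nhdsWithin_le_nhds
  have hs : Tendsto Prod.snd (𝓝[>] (0 : ℝ) ×ˢ 𝓝[>] (0 : ℝ)) (𝓝 0) :=
    tendsto_snd.mono_right nhdsWithin_le_nhds
  have hcurve : ∀ᶠ p in 𝓝[>] (0 : ℝ) ×ˢ 𝓝[>] (0 : ℝ), 0 < p.2 ∧ |w p.2 - Y| ≤ L * p.2 :=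
    tendsto_snd.eventually (eventually_mem_nhdsWithin.and hw)
  have hlin : Tendsto (fun p : ℝ × ℝ => p.1 * (w p.2 - Y) / p.2) (𝓝[>] 0 ×ˢ 𝓝[>] 0) (𝓝 0) := by
    refine squeeze_zero_norm' (hcurve.mono fun p hp => ?_) (by simpa using hd.abs.mul_const L)
    rw [norm_div, norm_mul, Real.norm_of_nonneg hp.1.le, mul_div_assoc]
    exact mul_le_mul_of_nonneg_left ((div_le_iff₀ hp.1).2 hp.2) (norm_nonneg _)
  have hquad : Tendsto (fun p : ℝ × ℝ => (w p.2 - Y) ^ 2 / (2 * p.2)) (𝓝[>] 0 ×ˢ 𝓝[>] 0)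
      (𝓝 0) := by
    refine squeeze_zero' (hcurve.mono fun p hp => ?_) (hcurve.mono fun p hp => ?_)
      (by simpa using hs.const_mul (L ^ 2))
    · exact div_nonneg (sq_nonneg _) (mul_pos two_pos hp.1).le
    · rw [div_le_iff₀ (mul_pos two_pos hp.1), ← sq_abs]
      nlinarith [hp.1, pow_le_pow_left₀ (abs_nonneg _) hp.2 2]
  simpa using hlin.sub hquad

lemma tendsto_jumpWeight {b : ℝ} (hb : 0 < b) (hY : 0 < Y)
    (hw : ∀ᶠ s in 𝓝[>] 0, |w s - Y| ≤ L * s) :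
    Tendsto (fun p : ℝ × ℝ => jumpWeight b Y p.1 p.2 (w p.2)) (𝓝[>] 0 ×ˢ 𝓝[>] 0) (𝓝 1) := by
  have hw_lim : Tendsto (fun p : ℝ × ℝ => w p.2) (𝓝[>] 0 ×ˢ 𝓝[>] 0) (𝓝 Y) :=
    (tendsto_of_eventually_abs_sub_le_mul hw).comp tendsto_snd
  have hz : Tendsto (fun p : ℝ × ℝ => Y + p.1) (𝓝[>] (0 : ℝ) ×ˢ 𝓝[>] (0 : ℝ)) (𝓝 Y) := by
    have hd : Tendsto Prod.fst (𝓝[>] (0 : ℝ) ×ˢ 𝓝[>] (0 : ℝ)) (𝓝 0) :=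
      tendsto_fst.mono_right nhdsWithin_le_nhds
    simpa using hd.const_add Y
  have hpow : Tendsto (fun p : ℝ × ℝ => (w p.2 / (Y + p.1)) ^ b) (𝓝[>] 0 ×ˢ 𝓝[>] 0) (𝓝 1) := by
    simpa [hY.ne'] using (hw_lim.div hz hY.ne').rpow_const (p := b) (Or.inr hb.le)
  have hbessel : Tendsto (fun p : ℝ × ℝ => scaledBessel b ((Y + p.1) * w p.2 / p.2))
      (𝓝[>] 0 ×ˢ 𝓝[>] 0) (𝓝 (√(2 * π))⁻¹) :=
    (tendsto_scaledBessel_atTop hb).comp <| (hz.mul hw_lim).pos_mul_atTop (mul_pos hY hY)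
      (tendsto_inv_nhdsGT_zero.comp tendsto_snd)
  have hlim := ((hpow.const_mul √(2 * π)).mul (tendsto_jumpWeight_exponent hw).rexp).mul hbessel
  rwa [Real.exp_zero, mul_one, mul_one, mul_inv_cancel₀ (by positivity)] at hlim

end Limit

/-! ### Integrals in reversed time -/

lemma exists_pos_forall_mem_Icc {X : Type*} [TopologicalSpace X] {A : Set X} (hA : IsCompact A)
    {f : X → ℝ} (hf : ContinuousOn f A) (hf0 : ∀ x ∈ A, 0 < f x) :
    ∃ m M, 0 < m ∧ 0 ≤ M ∧ ∀ x ∈ A, f x ∈ Icc m M := by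
  obtain ⟨m, hm, hfm⟩ := hA.exists_forall_le' hf hf0
  obtain ⟨M, hM⟩ := hA.exists_bound_of_continuousOn hf
  exact ⟨m, |M|, hm, abs_nonneg M, fun x hx =>
    ⟨hfm x hx, (le_abs_self _).trans ((hM x hx).trans (le_abs_self M))⟩⟩

lemma intervalIntegrable_inv_sqrt {τ : ℝ} (hτ : 0 ≤ τ) :
    IntervalIntegrable (fun s => (√s)⁻¹) volume 0 τ :=
  (intervalIntegral.intervalIntegrable_rpow' (r := -(1 / 2)) (by norm_num)).congr fun s hs => by
    rw [uIoc_of_le hτ] at hs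
    rw [Real.rpow_neg hs.1.le, Real.sqrt_eq_rpow]

section ReversedTime

variable {b L τ : ℝ} {w ψ : ℝ → ℝ}

lemma exists_abs_mul_regularPart_le (hb : 0 < b) (hτ : 0 < τ) (hw : ContinuousOn w (Icc 0 τ))
    (hw0 : ∀ s ∈ Icc 0 τ, 0 < w s) (hwL : ∀ s ∈ Icc 0 τ, |w s - w 0| ≤ L * s)
    (hψ : ContinuousOn ψ (Icc 0 τ)) :
    ∃ C, ∀ z, w 0 ≤ z → ∀ s ∈ Ioo 0 τ, ‖ψ s * regularPart b (w 0) s z (w s)‖ ≤ C * (√s)⁻¹ := by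
  obtain ⟨m, M, hm, hM, hmM⟩ := exists_pos_forall_mem_Icc isCompact_Icc hw hw0
  obtain ⟨K, hK⟩ := isCompact_Icc.exists_bound_of_continuousOn hψ
  have hL : 0 ≤ L := nonneg_of_mul_nonneg_left
    ((abs_nonneg _).trans (hwL τ (right_mem_Icc.2 hτ.le))) hτ
  obtain ⟨C, hC⟩ := exists_abs_regularPart_le hb hm hM hL
  refine ⟨K * C, fun z hz s hs => ?_⟩
  have hs' := Ioo_subset_Icc_self hs
  have hψs := hK s hs'
  rw [norm_mul, mul_assoc]
  exact mul_le_mul hψs (hC (w 0) s z (w s) hs.1 ((hmM 0 (left_mem_Icc.2 hτ.le)).1.trans hz)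
    (hmM s hs').1 (hmM s hs').2 (hwL s hs')) (norm_nonneg _) ((norm_nonneg _).trans hψs)

lemma intervalIntegrable_mul_regularPart (hb : 0 < b) (hτ : 0 < τ)
    (hw : ContinuousOn w (Icc 0 τ)) (hw0 : ∀ s ∈ Icc 0 τ, 0 < w s)
    (hwL : ∀ s ∈ Icc 0 τ, |w s - w 0| ≤ L * s) (hψ : ContinuousOn ψ (Icc 0 τ)) {z : ℝ}
    (hz : w 0 ≤ z) :
    IntervalIntegrable (fun s => ψ s * regularPart b (w 0) s z (w s)) volume 0 τ := by
  obtain ⟨C, hC⟩ := exists_abs_mul_regularPart_le hb hτ hw hw0 hwL hψ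
  have hz0 := (hw0 0 (left_mem_Icc.2 hτ.le)).trans_le hz
  have hcont : ContinuousOn (fun s => ψ s * regularPart b (w 0) s z (w s)) (Ioo 0 τ) :=
    (hψ.mono Ioo_subset_Icc_self).mul <| continuousOn_regularPart hb (w 0) continuousOn_id
      continuousOn_const (hw.mono Ioo_subset_Icc_self) (fun s hs => hs.1) (fun _ _ => hz0)
      fun s hs => hw0 s (Ioo_subset_Icc_self hs)
  have hbase := (intervalIntegrable_inv_sqrt hτ.le).const_mul C
  rw [intervalIntegrable_iff_integrableOn_Ioo_of_le hτ.le] at hbase ⊢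
  exact hbase.mono' (hcont.aestronglyMeasurable measurableSet_Ioo)
    ((ae_restrict_iff' measurableSet_Ioo).2 (.of_forall (hC z hz)))

lemma tendsto_integral_mul_regularPart (hb : 0 < b) (hτ : 0 < τ)
    (hw : ContinuousOn w (Icc 0 τ)) (hw0 : ∀ s ∈ Icc 0 τ, 0 < w s)
    (hwL : ∀ s ∈ Icc 0 τ, |w s - w 0| ≤ L * s) (hψ : ContinuousOn ψ (Icc 0 τ)) :
    Tendsto (fun z => ∫ s in 0..τ, ψ s * regularPart b (w 0) s z (w s)) (𝓝[>] (w 0))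
      (𝓝 (∫ s in 0..τ, ψ s * regularPart b (w 0) s (w 0) (w s))) := by
  obtain ⟨C, hC⟩ := exists_abs_mul_regularPart_le hb hτ hw hw0 hwL hψ
  have hY := hw0 0 (left_mem_Icc.2 hτ.le)
  have hz : ∀ᶠ z in 𝓝[>] (w 0), w 0 ≤ z := nhdsWithin_mono _ Ioi_subset_Ici_self
    self_mem_nhdsWithin
  have hτ_ne : ∀ᵐ s : ℝ, s ≠ τ := Measure.ae_ne volume τ
  refine intervalIntegral.tendsto_integral_filter_of_dominated_convergence (fun s => C * (√s)⁻¹)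
    (hz.mono fun z hz => (intervalIntegrable_mul_regularPart hb hτ hw hw0 hwL hψ
      hz).def'.aestronglyMeasurable)
    (hz.mono fun z hz => ?_) ((intervalIntegrable_inv_sqrt hτ.le).const_mul C) ?_
  · filter_upwards [hτ_ne] with s hsτ hs
    rw [uIoc_of_le hτ.le] at hs
    exact hC z hz s ⟨hs.1, hs.2.lt_of_ne hsτ⟩
  · refine .of_forall fun s hs => ?_
    rw [uIoc_of_le hτ.le] at hs
    have hcont : ContinuousOn (fun z => regularPart b (w 0) s z (w s)) (Ioi 0) :=
      continuousOn_regularPart hb (w 0) continuousOn_const continuousOn_id continuousOn_const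
        (fun _ _ => hs.1) (fun z hz => hz) fun _ _ => hw0 s (Ioc_subset_Icc_self hs)
    exact (((hcont.continuousAt (Ioi_mem_nhds hY)).tendsto).mono_left
      nhdsWithin_le_nhds).const_mul (ψ s)

lemma mul_div_mul_besselKernel_eqOn (b : ℝ) (hw0 : ∀ s ∈ Icc 0 τ, 0 < w s) {d : ℝ} (hd : 0 < d)
    (hτ : 0 ≤ τ) (ψ : ℝ → ℝ) :
    EqOn (fun s => ψ s * (d / s * besselKernel b s (w 0 + d) (w s)))
      (fun s => levyDensity d s * (ψ s * jumpWeight b (w 0) d s (w s))) (Ioo 0 τ) := by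
  intro s hs
  have hY := hw0 0 (left_mem_Icc.2 hτ)
  simp only [div_mul_besselKernel_eq_levyDensity_mul b d (add_pos hY hd) hs.1
    (hw0 s (Ioo_subset_Icc_self hs)), mul_left_comm]

lemma exists_abs_mul_jumpWeight_le (hb : 0 < b) (hτ : 0 ≤ τ) (hw : ContinuousOn w (Icc 0 τ))
    (hw0 : ∀ s ∈ Icc 0 τ, 0 < w s) (hwL : ∀ s ∈ Icc 0 τ, |w s - w 0| ≤ L * s)
    (hψ : ContinuousOn ψ (Icc 0 τ)) :
    ∃ K, ∀ d, 0 < d → d ≤ 1 → ∀ s ∈ Ioo 0 τ, |ψ s * jumpWeight b (w 0) d s (w s)| ≤ K := by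
  obtain ⟨m, M, hm, hM, hmM⟩ := exists_pos_forall_mem_Icc isCompact_Icc hw hw0
  obtain ⟨K, hK⟩ := isCompact_Icc.exists_bound_of_continuousOn hψ
  obtain ⟨C, hC⟩ := exists_abs_jumpWeight_le (L := L) hb hm hM
  refine ⟨K * C, fun d hd hd1 s hs => ?_⟩
  have hs' := Ioo_subset_Icc_self hs
  have hψs := hK s hs'
  rw [abs_mul]
  exact mul_le_mul hψs (hC (w 0) d s (w s) hd hd1 hs.1 (hmM 0 (left_mem_Icc.2 hτ)).1
    (hmM s hs').1 (hmM s hs').2 (hwL s hs')) (abs_nonneg _) ((norm_nonneg _).trans hψs)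

lemma continuousOn_mul_jumpWeight (hb : 0 < b) (hτ : 0 ≤ τ) (hw : ContinuousOn w (Icc 0 τ))
    (hw0 : ∀ s ∈ Icc 0 τ, 0 < w s) (hψ : ContinuousOn ψ (Icc 0 τ)) {d : ℝ} (hd : 0 < d) :
    ContinuousOn (fun s => ψ s * jumpWeight b (w 0) d s (w s)) (Ioo 0 τ) :=
  (hψ.mono Ioo_subset_Icc_self).mul <|
    continuousOn_jumpWeight hb (add_pos (hw0 0 (left_mem_Icc.2 hτ)) hd) (fun _ hs => hs.1)
      (hw.mono Ioo_subset_Icc_self) fun s hs => hw0 s (Ioo_subset_Icc_self hs)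

lemma intervalIntegrable_mul_div_mul_besselKernel (hb : 0 < b) (hτ : 0 ≤ τ)
    (hw : ContinuousOn w (Icc 0 τ)) (hw0 : ∀ s ∈ Icc 0 τ, 0 < w s)
    (hwL : ∀ s ∈ Icc 0 τ, |w s - w 0| ≤ L * s) (hψ : ContinuousOn ψ (Icc 0 τ)) {d : ℝ}
    (hd : 0 < d) (hd1 : d ≤ 1) :
    IntervalIntegrable (fun s => ψ s * (d / s * besselKernel b s (w 0 + d) (w s))) volume 0 τ := by
  obtain ⟨K, hK⟩ := exists_abs_mul_jumpWeight_le hb hτ hw hw0 hwL hψ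
  rw [intervalIntegrable_iff_integrableOn_Ioo_of_le hτ]
  exact (integrableOn_levyDensity_mul hd measurableSet_Ioo (fun _ hs => hs.1)
    ((continuousOn_mul_jumpWeight hb hτ hw hw0 hψ hd).aestronglyMeasurable measurableSet_Ioo)
    (hK d hd hd1)).congr_fun (mul_div_mul_besselKernel_eqOn b hw0 hd hτ ψ).symm measurableSet_Ioo

lemma tendsto_integral_mul_div_mul_besselKernel (hb : 0 < b) (hτ : 0 < τ)
    (hw : ContinuousOn w (Icc 0 τ)) (hw0 : ∀ s ∈ Icc 0 τ, 0 < w s)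
    (hwL : ∀ s ∈ Icc 0 τ, |w s - w 0| ≤ L * s) (hψ : ContinuousOn ψ (Icc 0 τ)) :
    Tendsto (fun d => ∫ s in 0..τ, ψ s * (d / s * besselKernel b s (w 0 + d) (w s))) (𝓝[>] 0)
      (𝓝 (ψ 0)) := by
  obtain ⟨K, hK⟩ := exists_abs_mul_jumpWeight_le hb hτ.le hw hw0 hwL hψ
  have h0 : (0 : ℝ) ∈ Icc 0 τ := left_mem_Icc.2 hτ.le
  have hpos : ∀ᶠ d : ℝ in 𝓝[>] 0, 0 < d := self_mem_nhdsWithin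
  have hle_one : ∀ᶠ d : ℝ in 𝓝[>] 0, d ≤ 1 := nhdsWithin_le_nhds (Iic_mem_nhds one_pos)
  have hψ_lim : Tendsto (fun p : ℝ × ℝ => ψ p.2) (𝓝[>] 0 ×ˢ 𝓝[>] 0) (𝓝 (ψ 0)) :=
    ((hψ 0 h0).mono_left (nhdsWithin_le_of_mem (Icc_mem_nhdsGT hτ))).comp tendsto_snd
  have hweight : Tendsto (fun p : ℝ × ℝ => jumpWeight b (w 0) p.1 p.2 (w p.2))
      (𝓝[>] 0 ×ˢ 𝓝[>] 0) (𝓝 1) :=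
    tendsto_jumpWeight hb (hw0 0 h0) (eventually_of_mem (Icc_mem_nhdsGT hτ) hwL)
  have hlim := tendsto_intervalIntegral_levyDensity_mul
    (F := fun d s => ψ s * jumpWeight b (w 0) d s (w s)) (K := K) hτ
    (hpos.mono fun d hd => continuousOn_mul_jumpWeight hb hτ.le hw hw0 hψ hd)
    ((hpos.and hle_one).mono fun d hd => hK d hd.1 hd.2) (hψ_lim.mul hweight)
  rw [mul_one] at hlim
  exact hlim.congr' <| hpos.mono fun d hd =>
    intervalIntegral.integral_congr_Ioo_of_le hτ.le
      (mul_div_mul_besselKernel_eqOn b hw0 hd hτ.le ψ).symm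

lemma regularPart_self (b Y s : ℝ) : regularPart b Y s Y = deriv (besselKernel b s Y) := by
  ext ζ
  rw [regularPart, sub_self, zero_div, zero_mul, sub_zero]

lemma tendsto_integral_mul_deriv_besselKernel (hb : 0 < b) (hτ : 0 < τ)
    (hw : ContinuousOn w (Icc 0 τ)) (hw0 : ∀ s ∈ Icc 0 τ, 0 < w s)
    (hwL : ∀ s ∈ Icc 0 τ, |w s - w 0| ≤ L * s) (hψ : ContinuousOn ψ (Icc 0 τ)) :
    Tendsto (fun z => ∫ s in 0..τ, ψ s * deriv (besselKernel b s z) (w s)) (𝓝[>] (w 0))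
      (𝓝 (ψ 0 + ∫ s in 0..τ, ψ s * deriv (besselKernel b s (w 0)) (w s))) := by
  have hshift : 𝓝[>] (w 0) = map (w 0 + ·) (𝓝[>] 0) := by rw [map_add_left_nhdsGT, add_zero]
  have hreg := tendsto_integral_mul_regularPart hb hτ hw hw0 hwL hψ
  have hsing := tendsto_integral_mul_div_mul_besselKernel hb hτ hw hw0 hwL hψ
  simp only [regularPart_self] at hreg
  rw [hshift, tendsto_map'_iff] at hreg ⊢
  refine (hsing.add hreg).congr' ?_
  filter_upwards [self_mem_nhdsWithin, nhdsWithin_le_nhds (Iic_mem_nhds one_pos)] with d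
    (hd : 0 < d) (hd1 : d ≤ 1)
  rw [Function.comp_apply, Function.comp_apply, ← intervalIntegral.integral_add
    (intervalIntegrable_mul_div_mul_besselKernel hb hτ.le hw hw0 hwL hψ hd hd1)
    (intervalIntegrable_mul_regularPart hb hτ hw hw0 hwL hψ (le_add_of_nonneg_right hd.le))]
  congr 1 with s
  rw [regularPart, add_sub_cancel_left]
  ring

end ReversedTime

/-- The Bessel potential `q(τ, z)` with density `Ψ` on the moving boundary `y`. The derivative is
taken in the second space variable of the kernel; for `z = y τ` the integral is improper at `τ`. -/
noncomputable def besselPotential (b : ℝ) (y Ψ : ℝ → ℝ) (τ z : ℝ) : ℝ :=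
  ∫ k in 0..τ, Ψ k * deriv (besselKernel b (τ - k) z) (y k)

theorem bessel_potential_jump_relation_general {b L τ : ℝ} {y Ψ : ℝ → ℝ} (hb : 0 < b) (hτ : 0 < τ)
    (hy : ContinuousOn y (Icc 0 τ)) (hy0 : ∀ k ∈ Icc 0 τ, 0 < y k)
    (hyL : ∀ k ∈ Icc 0 τ, |y k - y τ| ≤ L * (τ - k)) (hΨ : ContinuousOn Ψ (Icc 0 τ)) :
    IntervalIntegrable (fun k => Ψ k * deriv (besselKernel b (τ - k) (y τ)) (y k)) volume 0 τ ∧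
      Tendsto (besselPotential b y Ψ τ) (𝓝[>] (y τ))
        (𝓝 (Ψ τ + besselPotential b y Ψ τ (y τ))) := by
  have hrev : MapsTo (τ - ·) (Icc 0 τ) (Icc 0 τ) := fun s hs =>
    ⟨sub_nonneg.2 hs.2, sub_le_self τ hs.1⟩
  have hw : ContinuousOn (fun s => y (τ - s)) (Icc 0 τ) := hy.comp (by fun_prop) hrev
  have hw0 : ∀ s ∈ Icc 0 τ, 0 < y (τ - s) := fun s hs => hy0 _ (hrev hs)
  have hwL : ∀ s ∈ Icc 0 τ, |y (τ - s) - y (τ - 0)| ≤ L * s := fun s hs => by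
    simpa using hyL _ (hrev hs)
  have hψ : ContinuousOn (fun s => Ψ (τ - s)) (Icc 0 τ) := hΨ.comp (by fun_prop) hrev
  have hpotential (z : ℝ) : ∫ s in 0..τ, Ψ (τ - s) * deriv (besselKernel b s z) (y (τ - s)) =
      besselPotential b y Ψ τ z := by
    simpa [besselPotential] using intervalIntegral.integral_comp_sub_left
      (fun k => Ψ k * deriv (besselKernel b (τ - k) z) (y k)) τ (a := 0) (b := τ)
  constructor
  · simpa [regularPart_self] using (intervalIntegrable_mul_regularPart hb hτ hw hw0 hwL hψ
      le_rfl).symm.comp_sub_left τ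
  · simpa [hpotential] using tendsto_integral_mul_deriv_besselKernel hb hτ hw hw0 hwL hψ

/-- jump relation of the single-layer Bessel potential at the moving
boundary: the improper integral at `z = y(τ)` converges and
`lim_{z→y(τ)⁺} q(τ,z) = Ψ(τ) + ∫_0^τ Ψ(k)·[∂q_{τ−k}(y(τ),ζ,b)/∂ζ]|_{ζ=y(k)} dk`. -/
theorem bessel_potential_jump_relation
    (b T' : ℝ) (hb : 1 / 2 ≤ b) (hT' : 0 < T')
    (y Ψ : ℝ → ℝ)
    (hy : ContDiffOn ℝ 1 y (Set.Icc 0 T'))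
    (hypos : ∀ k ∈ Set.Icc (0 : ℝ) T', 0 < y k)
    (hΨ : ContinuousOn Ψ (Set.Icc 0 T'))
    (q : ℝ → ℝ → ℝ)
    (hq : ∀ τ z, q τ z =
      ∫ k in (0 : ℝ)..τ, Ψ k * deriv (fun ζ => besselKernel b (τ - k) z ζ) (y k))
    (τ : ℝ) (hτ : τ ∈ Set.Ioc 0 T') :
    IntervalIntegrable
      (fun k => Ψ k * deriv (fun ζ => besselKernel b (τ - k) (y τ) ζ) (y k))
      MeasureTheory.volume 0 τ
    ∧ Filter.Tendsto (fun z => q τ z) (nhdsWithin (y τ) (Set.Ioi (y τ)))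
        (nhds (Ψ τ +
          ∫ k in (0 : ℝ)..τ, Ψ k * deriv (fun ζ => besselKernel b (τ - k) (y τ) ζ) (y k))) := by
  have hsub : Icc 0 τ ⊆ Icc 0 T' := Icc_subset_Icc_right hτ.2
  obtain ⟨L, hL⟩ := hy.exists_lipschitzOnWith one_ne_zero (convex_Icc 0 T') isCompact_Icc
  have hyL : ∀ k ∈ Icc 0 τ, |y k - y τ| ≤ L * (τ - k) := fun k hk => by
    have hdist := hL.dist_le_mul k (hsub hk) τ (Ioc_subset_Icc_self hτ)
    rwa [Real.dist_eq, Real.dist_eq, abs_sub_comm k, abs_of_nonneg (sub_nonneg.2 hk.2)] at hdist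
  simp only [hq]
  exact bessel_potential_jump_relation_general (one_half_pos.trans_le hb) hτ.1
    (hy.continuousOn.mono hsub) (fun k hk => hypos k (hsub hk)) hyL (hΨ.mono hsub)
end
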